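/- arXiv:2102.08045 — 6 statements merged into one kernel-verified Lean document; each statement's English description precedes it below -/
import Mathlib

section
/- Let α > 0. There exists a constant C > 0, depending only on α, such that for every ε > 0 with αε ≤ 1/2 the following holds. Set k = √(3α/4), c = 1/√(1−αε), ζ₁(t,x) = α·sech²(k(x−ct)) and v₁(t,x) = c·ζ₁(t,x)/(1 + ε·ζ₁(t,x)). Then for all (t,x) ∈ ℝ²: |∂_t v₁ − (ε/3)·∂_x²∂_t v₁ + ∂_x ζ₁ + ε·v₁·∂_x v₁| ≤ C·ε². -/
/-- Partial derivative with respect to the first (time) variable. -/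
noncomputable def pt (u : ℝ → ℝ → ℝ) : ℝ → ℝ → ℝ := fun t x => deriv (fun s => u s x) t

/-- Partial derivative with respect to the second (space) variable. -/
noncomputable def px (u : ℝ → ℝ → ℝ) : ℝ → ℝ → ℝ := fun t x => deriv (fun y => u t y) x

/-!
For a travelling wave `ζ = Z(k(x - ct))`, `v = V(k(x - ct))` the left-hand side of the momentum
equation is an exact derivative: it equals `k Φ'(k(x - ct))` with
`Φ = -c V + (ε c k² / 3) V'' + Z + (ε / 2) V²`.
For the solitary wave `Z = α F₀` and `V = c α F_b`, where `b = αε` and `F_b = 1 / (cosh² + b)`.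
Since `F_b''` is a cubic polynomial in `F_b` and `F₀ - F_b = b F₀ F_b`, the terms of order `1` and
`b` in `Φ` cancel when `k² = 3α/4` and `c² (1 - b) = 1`. What is left is `α c² b²` times a
polynomial in `F₀` and `F_b`, whose derivative is bounded because `0 < F_b ≤ 1` and
`|F_b'| ≤ 2 F_b`.
-/

open Real

/-- The wave with profile `f` and wave number `k` moving at speed `c`; the profile is a function of
the phase `k (x - c t)`. -/
noncomputable def travelingWave (k c : ℝ) (f : ℝ → ℝ) : ℝ → ℝ → ℝ :=
  fun t x => f (k * (x - c * t))

theorem px_travelingWave (k c : ℝ) (f : ℝ → ℝ) :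
    px (travelingWave k c f) = travelingWave k c fun θ => k * deriv f θ := by
  funext t x
  have shift := deriv_comp_sub_const (fun y => f (k * y)) (c * t) x
  exact shift.trans (deriv_comp_mul_left k f (x - c * t))

theorem pt_travelingWave (k c : ℝ) (f : ℝ → ℝ) :
    pt (travelingWave k c f) = travelingWave k c fun θ => -(c * k) * deriv f θ := by
  funext t x
  have scale := deriv_comp_mul_left c (fun s => f (k * (x - s))) t
  have reflect := deriv_comp_const_sub (fun y => f (k * y)) x (c * t)
  have stretch := deriv_comp_mul_left k f (x - c * t)
  simp only [smul_eq_mul] at scale stretch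
  simp only [pt, travelingWave, scale, reflect, stretch]
  ring

/-- The left-hand side `∂ₜv - (ε/3) ∂ₓ²∂ₜv + ∂ₓζ + ε v ∂ₓv` of the momentum equation of the
Boussinesq system. -/
noncomputable def momentumResidual (ε : ℝ) (ζ v : ℝ → ℝ → ℝ) (t x : ℝ) : ℝ :=
  pt v t x - ε / 3 * px (px (pt v)) t x + px ζ t x + ε * v t x * px v t x

/-- The integrated momentum equation for the profiles `Z` of the elevation and `V` of the velocity
of a travelling wave, as a function of the phase. -/
noncomputable def momentumPotential (ε k c : ℝ) (Z V : ℝ → ℝ) (θ : ℝ) : ℝ :=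
  -c * V θ + ε * c * k ^ 2 / 3 * deriv (deriv V) θ + Z θ + ε / 2 * V θ ^ 2

theorem momentumResidual_travelingWave (ε k c : ℝ) {Z V : ℝ → ℝ} (hZ : Differentiable ℝ Z)
    (hV : Differentiable ℝ V) (hV'' : Differentiable ℝ (deriv (deriv V))) (t x : ℝ) :
    momentumResidual ε (travelingWave k c Z) (travelingWave k c V) t x =
      k * deriv (momentumPotential ε k c Z V) (k * (x - c * t)) := by
  set θ := k * (x - c * t) with hθ
  have deriv_potential : HasDerivAt (momentumPotential ε k c Z V)
      (-c * deriv V θ + ε * c * k ^ 2 / 3 * deriv (deriv (deriv V)) θ + deriv Z θ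
        + ε / 2 * (2 * V θ * deriv V θ)) θ := by
    have hVθ := (hV θ).hasDerivAt
    refine ((((hVθ.const_mul (-c)).add
      ((hV'' θ).hasDerivAt.const_mul (ε * c * k ^ 2 / 3))).add (hZ θ).hasDerivAt).add
      ((hVθ.fun_pow 2).const_mul (ε / 2))).congr_deriv ?_
    simp
  rw [deriv_potential.deriv]
  simp only [momentumResidual, pt_travelingWave, px_travelingWave, deriv_const_mul_field]
  simp only [travelingWave, ← hθ]
  ring

/-- The profile `1 / (cosh² + b)`: the elevation of the solitary wave of amplitude `α` has profile
`α / cosh²`, and its velocity is proportional to the profile with `b = αε`. -/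
noncomputable def solitaryProfile (b θ : ℝ) : ℝ := (cosh θ ^ 2 + b)⁻¹

theorem solitaryProfile_zero (θ : ℝ) : solitaryProfile 0 θ = (1 / cosh θ) ^ 2 := by
  simp [solitaryProfile]

theorem mul_sech_sq_div_one_add (α ε θ : ℝ) :
    α * (1 / cosh θ) ^ 2 / (1 + ε * (α * (1 / cosh θ) ^ 2)) = α * solitaryProfile (α * ε) θ := by
  have cosh_ne : cosh θ ≠ 0 := (cosh_pos θ).ne'
  have denominator : 1 + ε * (α * (1 / cosh θ) ^ 2) = (cosh θ ^ 2 + α * ε) * (1 / cosh θ) ^ 2 := by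
    field_simp
  rw [denominator, mul_div_mul_right _ _ (by positivity), solitaryProfile, div_eq_mul_inv]

section SolitaryProfile

variable {b : ℝ}

theorem cosh_sq_add_pos (hb : -1 < b) (θ : ℝ) : 0 < cosh θ ^ 2 + b := by
  have : 1 ≤ cosh θ ^ 2 := one_le_pow₀ (one_le_cosh θ)
  linarith

theorem solitaryProfile_pos (hb : -1 < b) (θ : ℝ) : 0 < solitaryProfile b θ :=
  inv_pos.mpr (cosh_sq_add_pos hb θ)

theorem solitaryProfile_le_one (hb : 0 ≤ b) (θ : ℝ) : solitaryProfile b θ ≤ 1 := by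
  have : 1 ≤ cosh θ ^ 2 := one_le_pow₀ (one_le_cosh θ)
  exact inv_le_one_of_one_le₀ (by linarith)

theorem hasDerivAt_solitaryProfile (hb : -1 < b) (θ : ℝ) :
    HasDerivAt (solitaryProfile b) (-(2 * sinh θ * cosh θ) * solitaryProfile b θ ^ 2) θ := by
  have deriv_denominator : HasDerivAt (fun θ => cosh θ ^ 2 + b) (2 * sinh θ * cosh θ) θ :=
    (((hasDerivAt_cosh θ).fun_pow 2).add_const b).congr_deriv (by push_cast; ring)
  refine (deriv_denominator.fun_inv (cosh_sq_add_pos hb θ).ne').congr_deriv ?_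
  rw [solitaryProfile, inv_pow, div_eq_mul_inv]

theorem differentiable_solitaryProfile (hb : -1 < b) : Differentiable ℝ (solitaryProfile b) :=
  fun θ => (hasDerivAt_solitaryProfile hb θ).differentiableAt

theorem deriv_deriv_solitaryProfile (hb : -1 < b) (θ : ℝ) :
    deriv (deriv (solitaryProfile b)) θ =
      4 * solitaryProfile b θ - 6 * (2 * b + 1) * solitaryProfile b θ ^ 2
        + 8 * b * (b + 1) * solitaryProfile b θ ^ 3 := by
  have deriv_eq : deriv (solitaryProfile b) =
      fun θ => -(2 * sinh θ * cosh θ) * solitaryProfile b θ ^ 2 :=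
    funext fun θ => (hasDerivAt_solitaryProfile hb θ).deriv
  have deriv_factor : HasDerivAt (fun θ => -(2 * sinh θ * cosh θ))
      (-(2 * (cosh θ ^ 2 + sinh θ ^ 2))) θ :=
    (((hasDerivAt_sinh θ).const_mul 2).fun_mul (hasDerivAt_cosh θ)).fun_neg.congr_deriv (by ring)
  have cosh_sq_eq : cosh θ ^ 2 = (solitaryProfile b θ)⁻¹ - b := by simp [solitaryProfile]
  have profile_ne := (solitaryProfile_pos hb θ).ne'
  rw [deriv_eq, (deriv_factor.fun_mul ((hasDerivAt_solitaryProfile hb θ).fun_pow 2)).deriv]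
  calc _ = -(2 * (cosh θ ^ 2 + sinh θ ^ 2)) * solitaryProfile b θ ^ 2
        + 8 * sinh θ ^ 2 * cosh θ ^ 2 * solitaryProfile b θ ^ 3 := by push_cast; ring
    _ = _ := by
      rw [sinh_sq, cosh_sq_eq]
      field_simp
      ring

theorem differentiable_deriv_deriv_solitaryProfile (hb : -1 < b) :
    Differentiable ℝ (deriv (deriv (solitaryProfile b))) := by
  have hF := differentiable_solitaryProfile hb
  rw [funext (deriv_deriv_solitaryProfile hb)]
  fun_prop

theorem abs_deriv_solitaryProfile_le (hb : 0 ≤ b) (θ : ℝ) :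
    |deriv (solitaryProfile b) θ| ≤ 2 * solitaryProfile b θ := by
  have hb' : -1 < b := by linarith
  have profile_pos := solitaryProfile_pos hb' θ
  have two_mul_sinh_mul_cosh_le : |2 * sinh θ * cosh θ| ≤ 2 * (cosh θ ^ 2 + b) := by
    rw [abs_le]
    constructor <;> nlinarith [sq_nonneg (sinh θ + cosh θ), sq_nonneg (sinh θ - cosh θ), sinh_sq θ]
  calc |deriv (solitaryProfile b) θ|
      = |2 * sinh θ * cosh θ| * solitaryProfile b θ ^ 2 := by
        rw [(hasDerivAt_solitaryProfile hb' θ).deriv, abs_mul, abs_neg, abs_sq]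
    _ ≤ 2 * (cosh θ ^ 2 + b) * solitaryProfile b θ ^ 2 := by gcongr
    _ = 2 * solitaryProfile b θ := by
        have := (cosh_sq_add_pos hb' θ).ne'
        simp only [solitaryProfile]
        field_simp

theorem abs_deriv_solitaryProfile_le_two (hb : 0 ≤ b) (θ : ℝ) :
    |deriv (solitaryProfile b) θ| ≤ 2 := by
  linarith [abs_deriv_solitaryProfile_le hb θ, solitaryProfile_le_one hb θ]

theorem solitaryProfile_zero_sub (hb : -1 < b) (θ : ℝ) :
    solitaryProfile 0 θ - solitaryProfile b θ =
      b * solitaryProfile 0 θ * solitaryProfile b θ := by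
  have := (cosh_sq_add_pos hb θ).ne'
  have := (cosh_pos θ).ne'
  simp only [solitaryProfile, add_zero]
  field_simp
  ring

/-- The polynomial in `F₀` and `F_b` that remains of the momentum potential of the solitary wave
after division by `α c² b²`. -/
noncomputable def solitaryRemainder (b θ : ℝ) : ℝ :=
  solitaryProfile 0 θ * solitaryProfile b θ ^ 2 - solitaryProfile 0 θ * solitaryProfile b θ
    - 3 * solitaryProfile b θ ^ 2 + 2 * (b + 1) * solitaryProfile b θ ^ 3

theorem integrated_momentum_solitaryProfile (hb : -1 < b) (θ : ℝ) :
    -solitaryProfile b θ + b / 4 * deriv (deriv (solitaryProfile b)) θ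
        + (1 - b) * solitaryProfile 0 θ + b / 2 * solitaryProfile b θ ^ 2 =
      b ^ 2 * solitaryRemainder b θ := by
  rw [deriv_deriv_solitaryProfile hb, solitaryRemainder]
  linear_combination (1 - b + b * solitaryProfile b θ) * solitaryProfile_zero_sub hb θ

theorem hasDerivAt_solitaryRemainder (hb : -1 < b) (θ : ℝ) :
    HasDerivAt (solitaryRemainder b)
      (deriv (solitaryProfile 0) θ * (solitaryProfile b θ ^ 2 - solitaryProfile b θ)
        + deriv (solitaryProfile b) θ * (2 * solitaryProfile 0 θ * solitaryProfile b θ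
          - solitaryProfile 0 θ - 6 * solitaryProfile b θ
          + 6 * (b + 1) * solitaryProfile b θ ^ 2)) θ := by
  have hF₀ := (differentiable_solitaryProfile (by norm_num : (-1 : ℝ) < 0) θ).hasDerivAt
  have hF := (differentiable_solitaryProfile hb θ).hasDerivAt
  refine ((((hF₀.fun_mul (hF.fun_pow 2)).sub (hF₀.fun_mul hF)).sub
    ((hF.fun_pow 2).const_mul 3)).add ((hF.fun_pow 3).const_mul (2 * (b + 1)))).congr_deriv ?_
  push_cast
  ring

theorem abs_deriv_solitaryRemainder_le (hb : 0 ≤ b) (θ : ℝ) :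
    |deriv (solitaryRemainder b) θ| ≤ 18 + 12 * b := by
  have hb' : -1 < b := by linarith
  have hF₀' := abs_deriv_solitaryProfile_le_two le_rfl θ
  have hF' := abs_deriv_solitaryProfile_le_two hb θ
  have hF₀_nonneg := (solitaryProfile_pos (by norm_num : (-1 : ℝ) < 0) θ).le
  have hF₀_le := solitaryProfile_le_one le_rfl θ
  have hF_nonneg := (solitaryProfile_pos hb' θ).le
  have hF_le := solitaryProfile_le_one hb θ
  rw [(hasDerivAt_solitaryRemainder hb' θ).deriv]
  generalize solitaryProfile 0 θ = F₀ at *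
  generalize solitaryProfile b θ = F at *
  have hFsq_le : F ^ 2 ≤ 1 := pow_le_one₀ hF_nonneg hF_le
  have hF₀F_le : F₀ * F ≤ 1 := mul_le_one₀ hF₀_le hF_nonneg hF_le
  have hF₀F_nonneg : 0 ≤ F₀ * F := by positivity
  have hbFsq_nonneg : 0 ≤ (b + 1) * F ^ 2 := by positivity
  have hbFsq_le : (b + 1) * F ^ 2 ≤ b + 1 := mul_le_of_le_one_right (by linarith) hFsq_le
  have coeff_F₀' : |F ^ 2 - F| ≤ 1 := abs_le.mpr ⟨by nlinarith, by linarith⟩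
  have coeff_F' : |2 * F₀ * F - F₀ - 6 * F + 6 * (b + 1) * F ^ 2| ≤ 8 + 6 * b :=
    abs_le.mpr ⟨by linarith, by linarith⟩
  calc _ ≤ _ := abs_add_le _ _
    _ ≤ 2 * 1 + 2 * (8 + 6 * b) := by
      rw [abs_mul, abs_mul]
      gcongr
    _ = 18 + 12 * b := by ring

end SolitaryProfile

theorem momentumPotential_solitaryProfile {α ε k c : ℝ} (hαε : -1 < α * ε)
    (hk : k ^ 2 = 3 * α / 4) (hc : c ^ 2 * (1 - α * ε) = 1) :
    momentumPotential ε k c (fun θ => α * solitaryProfile 0 θ)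
        (fun θ => c * α * solitaryProfile (α * ε) θ) =
      fun θ => α * c ^ 2 * (α * ε) ^ 2 * solitaryRemainder (α * ε) θ := by
  funext θ
  simp only [momentumPotential, deriv_const_mul_field']
  linear_combination α * c ^ 2 * integrated_momentum_solitaryProfile hαε θ
    + ε * c ^ 2 * α / 3 * deriv (deriv (solitaryProfile (α * ε))) θ * hk
    - α * solitaryProfile 0 θ * hc

theorem momentumResidual_solitaryWave {α ε k c : ℝ} (hαε : -1 < α * ε)
    (hk : k ^ 2 = 3 * α / 4) (hc : c ^ 2 * (1 - α * ε) = 1) (t x : ℝ) :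
    momentumResidual ε (travelingWave k c fun θ => α * solitaryProfile 0 θ)
        (travelingWave k c fun θ => c * α * solitaryProfile (α * ε) θ) t x =
      k * (α * c ^ 2 * (α * ε) ^ 2 * deriv (solitaryRemainder (α * ε)) (k * (x - c * t))) := by
  have hZ := (differentiable_solitaryProfile (by norm_num : (-1 : ℝ) < 0)).const_mul α
  have hV := (differentiable_solitaryProfile hαε).const_mul (c * α)
  have hV'' : Differentiable ℝ (deriv (deriv fun θ => c * α * solitaryProfile (α * ε) θ)) := by
    simpa only [deriv_const_mul_field'] using
      (differentiable_deriv_deriv_solitaryProfile hαε).const_mul (c * α)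
  rw [momentumResidual_travelingWave ε k c hZ hV hV'',
    momentumPotential_solitaryProfile hαε hk hc, deriv_const_mul_field]

theorem abs_momentumResidual_solitaryWave_le {α ε k c : ℝ} (hα : 0 ≤ α) (hε : 0 ≤ ε)
    (hαε : α * ε ≤ 1 / 2) (hk_nonneg : 0 ≤ k) (hk : k ^ 2 = 3 * α / 4)
    (hc : c ^ 2 * (1 - α * ε) = 1) (t x : ℝ) :
    |momentumResidual ε (travelingWave k c fun θ => α * solitaryProfile 0 θ)
        (travelingWave k c fun θ => c * α * solitaryProfile (α * ε) θ) t x| ≤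
      48 * α ^ 3 * k * ε ^ 2 := by
  have hb : 0 ≤ α * ε := by positivity
  have hc_le : c ^ 2 ≤ 2 := by nlinarith [sq_nonneg c]
  have hR : |deriv (solitaryRemainder (α * ε)) (k * (x - c * t))| ≤ 24 := by
    linarith [abs_deriv_solitaryRemainder_le hb (k * (x - c * t))]
  calc _ = k * (α * c ^ 2 * (α * ε) ^ 2 *
        |deriv (solitaryRemainder (α * ε)) (k * (x - c * t))|) := by
        rw [momentumResidual_solitaryWave (by linarith) hk hc, abs_mul, abs_mul,
          abs_of_nonneg hk_nonneg, abs_of_nonneg (by positivity)]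
    _ ≤ k * (α * 2 * (α * ε) ^ 2 * 24) := by gcongr
    _ = 48 * α ^ 3 * k * ε ^ 2 := by ring

theorem boussinesq_solitary_momentum_equation (α : ℝ) (hα : 0 < α) :
    ∃ C > (0:ℝ), ∀ ε : ℝ, 0 < ε → α * ε ≤ 1 / 2 →
      let k : ℝ := Real.sqrt (3 * α / 4)
      let c : ℝ := 1 / Real.sqrt (1 - α * ε)
      let ζ₁ : ℝ → ℝ → ℝ := fun t x => α * (1 / Real.cosh (k * (x - c * t))) ^ 2
      let v₁ : ℝ → ℝ → ℝ := fun t x => c * ζ₁ t x / (1 + ε * ζ₁ t x)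
      ∀ t x : ℝ,
        |pt v₁ t x - ε / 3 * px (px (pt v₁)) t x + px ζ₁ t x
          + ε * v₁ t x * px v₁ t x| ≤ C * ε ^ 2 := by
  refine ⟨48 * α ^ 3 * √(3 * α / 4), by positivity, ?_⟩
  intro ε hε hαε k c ζ₁ v₁ t x
  have hk : k ^ 2 = 3 * α / 4 := sq_sqrt (by positivity)
  have hc : c ^ 2 * (1 - α * ε) = 1 := by
    have one_sub_pos : 0 < 1 - α * ε := by linarith
    rw [div_pow, sq_sqrt one_sub_pos.le, one_pow, one_div_mul_cancel one_sub_pos.ne']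
  have hζ : ζ₁ = travelingWave k c fun θ => α * solitaryProfile 0 θ := by
    funext t x
    simp only [ζ₁, travelingWave, solitaryProfile_zero]
  have hv : v₁ = travelingWave k c fun θ => c * α * solitaryProfile (α * ε) θ := by
    funext t x
    simp only [v₁, ζ₁, travelingWave, mul_div_assoc c, mul_assoc c, mul_sech_sq_div_one_add]
  change |momentumResidual ε ζ₁ v₁ t x| ≤ _
  rw [hζ, hv]
  exact abs_momentumResidual_solitaryWave_le hα.le hε.le hαε (sqrt_nonneg _) hk hc t x
end

section
/- Let ε > 0 and c ∈ ℝ, and let ζ : ℝ → ℝ be four times continuously differentiable with 1 + ε·ζ(x) > 0 for all x, and such that ζ(x), ζ'(x), ζ''(x), ζ'''(x) all tend to 0 as x → −∞. Suppose that for all x ∈ ℝ: ζ − c²·ζ·(2+εζ)/(2(1+εζ)²) = −(εc²/3)·ζ'' + (ε²c²/6)·(ζ')² + (ε²c²/3)·ζ·ζ'' − (ε²c²/45)·ζ''''. Then for all x ∈ ℝ: (ζ²/2)·(1 − c²/(1+εζ)) = (εc²/6)·(εζ−1)·(ζ')² − (ε²c²/45)·ζ'''·ζ' + (ε²c²/90)·(ζ'')².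 -/
open Filter

/-!
Multiplying the traveling-wave equation by `ζ'` makes both sides exact derivatives: the left one of
a function of `ζ` alone, the right one of a polynomial in `ζ, ζ', ζ'', ζ'''` without constant term.
These two primitives both vanish at `-∞`, hence they coincide.
-/

theorem eq_of_hasDerivAt_of_tendsto {𝕜 E : Type*} [RCLike 𝕜] [NormedAddCommGroup E]
    [NormedSpace 𝕜 E] {f g f' : 𝕜 → E} {l : Filter 𝕜} [l.NeBot] {a : E}
    (hf : ∀ x, HasDerivAt f (f' x) x) (hg : ∀ x, HasDerivAt g (f' x) x)
    (hfa : Tendsto f l (nhds a)) (hga : Tendsto g l (nhds a)) : f = g := by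
  have hderiv (x : 𝕜) : HasDerivAt (f - g) 0 x :=
    ((hf x).sub (hg x)).congr_deriv (sub_self _)
  have hlim : Tendsto (f - g) l (nhds 0) := sub_self a ▸ hfa.sub hga
  funext x
  have hconst : f - g = fun _ ↦ (f - g) x := funext fun y ↦
    is_const_of_deriv_eq_zero (fun z ↦ (hderiv z).differentiableAt) (fun z ↦ (hderiv z).deriv) y x
  rw [hconst] at hlim
  exact sub_eq_zero.1 (tendsto_nhds_unique tendsto_const_nhds hlim)

theorem hasDerivAt_iterate_deriv_of_contDiff {𝕜 F : Type*} [NontriviallyNormedField 𝕜]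
    [NormedAddCommGroup F] [NormedSpace 𝕜 F] {f : 𝕜 → F} {n : WithTop ℕ∞} {k : ℕ}
    (hf : ContDiff 𝕜 n f) (hk : k < n) (x : 𝕜) :
    HasDerivAt (deriv^[k] f) (deriv^[k + 1] f x) x := by
  rw [Function.iterate_succ_apply', ← iteratedDeriv_eq_iterate]
  exact (hf.differentiable_iteratedDeriv k hk x).hasDerivAt

/-- The primitive, vanishing at `z = 0`, of the nondispersive part
`z - c² z (2 + ε z) / (2 (1 + ε z)²)` of the traveling-wave equation. -/
def wavePotential {𝕜 : Type*} [Field 𝕜] (ε c z : 𝕜) : 𝕜 :=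
  z ^ 2 / 2 * (1 - c ^ 2 / (1 + ε * z))

/-- The first integral of the dispersive part of the traveling-wave equation, as a function of the
values `z₀, z₁, z₂, z₃` of the wave profile and its first three derivatives at a point. -/
def dispersiveIntegral {𝕜 : Type*} [Field 𝕜] (ε c z₀ z₁ z₂ z₃ : 𝕜) : 𝕜 :=
  ε * c ^ 2 / 6 * (ε * z₀ - 1) * z₁ ^ 2 - ε ^ 2 * c ^ 2 / 45 * z₃ * z₁
    + ε ^ 2 * c ^ 2 / 90 * z₂ ^ 2

section Derivatives

variable {𝕜 : Type*} [NontriviallyNormedField 𝕜] [CharZero 𝕜] {ε c x : 𝕜}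

theorem hasDerivAt_wavePotential {z : 𝕜} (hz : 1 + ε * z ≠ 0) :
    HasDerivAt (wavePotential ε c)
      (z - c ^ 2 * z * (2 + ε * z) / (2 * (1 + ε * z) ^ 2)) z := by
  have hquadratic : HasDerivAt (fun w : 𝕜 ↦ w ^ 2 / 2) z z :=
    ((hasDerivAt_pow 2 z).div_const 2).congr_deriv (by simp)
  have hdenominator : HasDerivAt (fun w : 𝕜 ↦ 1 + ε * w) ε z := by
    simpa using ((hasDerivAt_id z).const_mul ε).const_add 1
  have hfactor : HasDerivAt (fun w : 𝕜 ↦ 1 - c ^ 2 / (1 + ε * w))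
      (c ^ 2 * ε / (1 + ε * z) ^ 2) z :=
    (((hasDerivAt_const z (c ^ 2)).fun_div hdenominator hz).const_sub 1).congr_deriv (by ring)
  exact (hquadratic.mul hfactor).congr_deriv (by grind)

variable {u₀ u₁ u₂ u₃ : 𝕜 → 𝕜} {u₄ : 𝕜}

theorem hasDerivAt_dispersiveIntegral (h₀ : HasDerivAt u₀ (u₁ x) x)
    (h₁ : HasDerivAt u₁ (u₂ x) x) (h₂ : HasDerivAt u₂ (u₃ x) x) (h₃ : HasDerivAt u₃ u₄ x) :
    HasDerivAt (fun y ↦ dispersiveIntegral ε c (u₀ y) (u₁ y) (u₂ y) (u₃ y))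
      ((-(ε * c ^ 2 / 3) * u₂ x + ε ^ 2 * c ^ 2 / 6 * u₁ x ^ 2
        + ε ^ 2 * c ^ 2 / 3 * u₀ x * u₂ x - ε ^ 2 * c ^ 2 / 45 * u₄) * u₁ x) x := by
  have hcubic : HasDerivAt (fun y ↦ ε * c ^ 2 / 6 * (ε * u₀ y - 1) * u₁ y ^ 2)
      (ε * c ^ 2 / 6 * (ε * u₁ x ^ 3 + 2 * (ε * u₀ x - 1) * u₁ x * u₂ x)) x :=
    ((((h₀.const_mul ε).sub_const 1).const_mul (ε * c ^ 2 / 6)).fun_mul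
      (h₁.fun_pow 2)).congr_deriv (by push_cast; ring)
  have hmixed : HasDerivAt (fun y ↦ ε ^ 2 * c ^ 2 / 45 * u₃ y * u₁ y)
      (ε ^ 2 * c ^ 2 / 45 * (u₄ * u₁ x + u₃ x * u₂ x)) x :=
    ((h₃.const_mul (ε ^ 2 * c ^ 2 / 45)).fun_mul h₁).congr_deriv (by ring)
  have hsquare : HasDerivAt (fun y ↦ ε ^ 2 * c ^ 2 / 90 * u₂ y ^ 2)
      (ε ^ 2 * c ^ 2 / 45 * (u₃ x * u₂ x)) x :=
    ((h₂.fun_pow 2).const_mul (ε ^ 2 * c ^ 2 / 90)).congr_deriv (by push_cast; ring)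
  exact ((hcubic.fun_sub hmixed).fun_add hsquare).congr_deriv (by ring)

end Derivatives

section Limits

variable {α 𝕜 : Type*} [Field 𝕜] [TopologicalSpace 𝕜] [IsTopologicalRing 𝕜] {l : Filter α}

theorem tendsto_wavePotential_zero [ContinuousInv₀ 𝕜] {u : α → 𝕜} (ε c : 𝕜)
    (hu : Tendsto u l (nhds 0)) : Tendsto (fun x ↦ wavePotential ε c (u x)) l (nhds 0) := by
  have hdenominator : Tendsto (fun x ↦ 1 + ε * u x) l (nhds 1) := by
    simpa using (hu.const_mul ε).const_add 1
  simpa [wavePotential] using ((hu.pow 2).div_const 2).mul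
    ((tendsto_const_nhds.div hdenominator one_ne_zero).const_sub 1)

theorem tendsto_dispersiveIntegral_zero {u₀ u₁ u₂ u₃ : α → 𝕜} (ε c : 𝕜)
    (h₀ : Tendsto u₀ l (nhds 0)) (h₁ : Tendsto u₁ l (nhds 0)) (h₂ : Tendsto u₂ l (nhds 0))
    (h₃ : Tendsto u₃ l (nhds 0)) :
    Tendsto (fun x ↦ dispersiveIntegral ε c (u₀ x) (u₁ x) (u₂ x) (u₃ x)) l (nhds 0) := by
  simpa [dispersiveIntegral] using
    (((((h₀.const_mul ε).sub_const 1).const_mul (ε * c ^ 2 / 6)).mul (h₁.pow 2)).sub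
      ((h₃.const_mul (ε ^ 2 * c ^ 2 / 45)).mul h₁)).add
      ((h₂.pow 2).const_mul (ε ^ 2 * c ^ 2 / 90))

end Limits

theorem integrated_solitary_wave_ode (ε c : ℝ) (hε : 0 < ε) (ζ : ℝ → ℝ)
    (hζ : ContDiff ℝ 4 ζ)
    (hpos : ∀ x : ℝ, 0 < 1 + ε * ζ x)
    (h0 : Tendsto ζ atBot (nhds 0))
    (h1 : Tendsto (deriv ζ) atBot (nhds 0))
    (h2 : Tendsto (deriv (deriv ζ)) atBot (nhds 0))
    (h3 : Tendsto (deriv (deriv (deriv ζ))) atBot (nhds 0))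
    (hode : ∀ x : ℝ,
      ζ x - c ^ 2 * ζ x * (2 + ε * ζ x) / (2 * (1 + ε * ζ x) ^ 2)
        = -(ε * c ^ 2 / 3) * deriv (deriv ζ) x
          + ε ^ 2 * c ^ 2 / 6 * (deriv ζ x) ^ 2
          + ε ^ 2 * c ^ 2 / 3 * ζ x * deriv (deriv ζ) x
          - ε ^ 2 * c ^ 2 / 45 * deriv (deriv (deriv (deriv ζ))) x) :
    ∀ x : ℝ,
      (ζ x) ^ 2 / 2 * (1 - c ^ 2 / (1 + ε * ζ x))
        = ε * c ^ 2 / 6 * (ε * ζ x - 1) * (deriv ζ x) ^ 2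
          - ε ^ 2 * c ^ 2 / 45 * deriv (deriv (deriv ζ)) x * deriv ζ x
          + ε ^ 2 * c ^ 2 / 90 * (deriv (deriv ζ) x) ^ 2 := by
  have hjet {k : ℕ} (hk : k < 4) (x : ℝ) : HasDerivAt (deriv^[k] ζ) (deriv^[k + 1] ζ x) x :=
    hasDerivAt_iterate_deriv_of_contDiff hζ (mod_cast hk) x
  have hpotential (x : ℝ) : HasDerivAt (fun y ↦ wavePotential ε c (ζ y))
      ((ζ x - c ^ 2 * ζ x * (2 + ε * ζ x) / (2 * (1 + ε * ζ x) ^ 2)) * deriv ζ x) x :=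
    (hasDerivAt_wavePotential (hpos x).ne').comp x (hjet (k := 0) (by simp) x)
  have hdispersive (x : ℝ) : HasDerivAt
      (fun y ↦ dispersiveIntegral ε c (ζ y) (deriv ζ y) (deriv (deriv ζ) y)
        (deriv (deriv (deriv ζ)) y))
      ((ζ x - c ^ 2 * ζ x * (2 + ε * ζ x) / (2 * (1 + ε * ζ x) ^ 2)) * deriv ζ x) x := by
    rw [hode x]
    exact hasDerivAt_dispersiveIntegral (hjet (k := 0) (by simp) x)
      (hjet (k := 1) (by simp) x) (hjet (k := 2) (by simp) x) (hjet (k := 3) (by simp) x)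
  exact congrFun <| eq_of_hasDerivAt_of_tendsto hpotential hdispersive
    (tendsto_wavePotential_zero ε c h0) (tendsto_dispersiveIntegral_zero ε c h0 h1 h2 h3)
end

section
/- Let ε > 0, let h : ℝ → ℝ be twice continuously differentiable with h(x) ≥ h_min for all x, where h_min > 0, and let f : ℝ → ℝ be four times continuously differentiable with compact support. Define (ℑf)(x) = h(x)·f(x) − (ε/3)·d/dx[h(x)³·f'(x)] + (ε²/45)·f''''(x). If ℑf = 0 identically on ℝ, then f = 0 identically on ℝ. -/
/-!
Multiply `ℑ f = 0` by `f`. Up to an exact derivative each term is a nonnegative multiple of a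
square, so `h f² + (ε/3) h³ f'² + (ε²/45) f''²` is the derivative of a flux, each term of which
carries a factor `f` or `f'`. The flux is thus compactly supported with nonnegative derivative, so
it vanishes, and with it every term of the energy density. The top-order term gives `f'' = 0`, and
compact support then forces `f' = 0` and `f = 0`.
-/

open Filter Topology

section CompactSupport

theorem eq_zero_of_monotone_of_hasCompactSupport {α β : Type*}
    [LinearOrder α] [TopologicalSpace α] [OrderClosedTopology α] [CompactIccSpace α]
    [NoMinOrder α] [NoMaxOrder α]
    [PartialOrder β] [TopologicalSpace β] [OrderClosedTopology β] [Zero β]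
    {F : α → β} (hmono : Monotone F) (hsupp : HasCompactSupport F) : F = 0 := by
  have hlim : Tendsto F (atBot ⊔ atTop) (𝓝 0) :=
    cocompact_eq_atBot_atTop (α := α) ▸ hsupp.is_zero_at_infty
  obtain ⟨hbot, htop⟩ := tendsto_sup.1 hlim
  exact funext fun x => le_antisymm (hmono.ge_of_tendsto htop x) (hmono.le_of_tendsto hbot x)

theorem eq_zero_of_deriv_nonneg_of_hasCompactSupport {F : ℝ → ℝ} (hF : Differentiable ℝ F)
    (hderiv : ∀ x, 0 ≤ deriv F x) (hsupp : HasCompactSupport F) : F = 0 :=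
  eq_zero_of_monotone_of_hasCompactSupport (monotone_of_deriv_nonneg hF hderiv) hsupp

theorem eq_zero_of_deriv_deriv_eq_zero_of_hasCompactSupport {u : ℝ → ℝ}
    (hu : Differentiable ℝ u) (hu' : Differentiable ℝ (deriv u))
    (hderiv : ∀ x, deriv (deriv u) x = 0) (hsupp : HasCompactSupport u) : u = 0 := by
  have deriv_eq_zero : deriv u = 0 :=
    eq_zero_of_deriv_nonneg_of_hasCompactSupport hu' (fun x => (hderiv x).ge) hsupp.deriv
  exact eq_zero_of_deriv_nonneg_of_hasCompactSupport hu
    (fun x => (congrFun deriv_eq_zero x).ge) hsupp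

end CompactSupport

/-- The fourth-order operator `u ↦ a u - (b u')' + (c u'')''` in divergence form. The operator `ℑ`
is the case `a = h`, `b = (ε/3) h³`, `c = ε²/45`. -/
noncomputable def divergenceFormOperator (a b c u : ℝ → ℝ) (x : ℝ) : ℝ :=
  a x * u x - deriv (fun y => b y * deriv u y) x
    + deriv (deriv fun y => c y * deriv (deriv u) y) x

/-- The regularity of `u` under which every derivative in `divergenceFormOperator a b c u` is a
genuine one; it allows nonsmooth coefficients as long as `b u'` and `c u''` are smooth enough. -/
structure IsDivergenceFormRegular (b c u : ℝ → ℝ) : Prop where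
  differentiable : Differentiable ℝ u
  differentiable_deriv : Differentiable ℝ (deriv u)
  differentiable_mul_deriv : Differentiable ℝ fun y => b y * deriv u y
  differentiable_mul_deriv_deriv : Differentiable ℝ fun y => c y * deriv (deriv u) y
  differentiable_deriv_mul_deriv_deriv :
    Differentiable ℝ (deriv fun y => c y * deriv (deriv u) y)

/-- The integrand `a u² + b u'² + c u''²` of the quadratic form associated with
`divergenceFormOperator a b c`. -/
noncomputable def energyDensity (a b c u : ℝ → ℝ) (x : ℝ) : ℝ :=
  a x * u x ^ 2 + b x * deriv u x ^ 2 + c x * deriv (deriv u) x ^ 2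

/-- The boundary term produced by integrating `u * divergenceFormOperator a b c u` by parts; it does
not involve `a`, which multiplies a term without derivatives. -/
noncomputable def energyFlux (b c u : ℝ → ℝ) (x : ℝ) : ℝ :=
  u x * (b x * deriv u x - deriv (fun y => c y * deriv (deriv u) y) x)
    + deriv u x * (c x * deriv (deriv u) x)

section Energy

variable {a b c u : ℝ → ℝ}

theorem isDivergenceFormRegular_of_contDiff (hb : Differentiable ℝ b) (hu : ContDiff ℝ 4 u)
    (C : ℝ) : IsDivergenceFormRegular b (fun _ => C) u := by
  have hu₁ : ContDiff ℝ 3 (deriv u) := hu.deriv'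
  have hu₂ : ContDiff ℝ 2 (deriv (deriv u)) := hu₁.deriv'
  have hu₃ : ContDiff ℝ 1 (deriv (deriv (deriv u))) := hu₂.deriv'
  have hu₁_diff := hu₁.differentiable three_ne_zero
  exact {
    differentiable := hu.differentiable four_ne_zero
    differentiable_deriv := hu₁_diff
    differentiable_mul_deriv := hb.mul hu₁_diff
    differentiable_mul_deriv_deriv := (hu₂.differentiable two_ne_zero).const_mul C
    differentiable_deriv_mul_deriv_deriv := by
      simpa only [deriv_const_mul_field'] using (hu₃.differentiable one_ne_zero).const_mul C }

theorem hasCompactSupport_energyFlux (hsupp : HasCompactSupport u) :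
    HasCompactSupport (energyFlux b c u) :=
  hsupp.mul_right.add hsupp.deriv.mul_right

theorem hasDerivAt_energyFlux (hreg : IsDivergenceFormRegular b c u) (x : ℝ) :
    HasDerivAt (energyFlux b c u)
      (energyDensity a b c u x - u x * divergenceFormOperator a b c u x) x := by
  have hu := (hreg.differentiable x).hasDerivAt
  have hu' := (hreg.differentiable_deriv x).hasDerivAt
  have hb := (hreg.differentiable_mul_deriv x).hasDerivAt
  have hc := (hreg.differentiable_mul_deriv_deriv x).hasDerivAt
  have hc' := (hreg.differentiable_deriv_mul_deriv_deriv x).hasDerivAt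
  have hflux := (hu.mul (hb.sub hc')).add (hu'.mul hc)
  refine hflux.congr_deriv ?_
  simp only [energyDensity, divergenceFormOperator, Pi.sub_apply]
  ring

theorem energyDensity_eq_zero_of_divergenceFormOperator_eq_zero
    (hreg : IsDivergenceFormRegular b c u) (hsupp : HasCompactSupport u)
    (hker : ∀ x, divergenceFormOperator a b c u x = 0)
    (hnonneg : ∀ x, 0 ≤ energyDensity a b c u x) (x : ℝ) : energyDensity a b c u x = 0 := by
  have hflux (y : ℝ) : HasDerivAt (energyFlux b c u) (energyDensity a b c u y) y := by
    simpa only [hker y, mul_zero, sub_zero] using hasDerivAt_energyFlux (a := a) hreg y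
  have flux_eq_zero : energyFlux b c u = 0 :=
    eq_zero_of_deriv_nonneg_of_hasCompactSupport (fun y => (hflux y).differentiableAt)
      (fun y => (hflux y).deriv ▸ hnonneg y) (hasCompactSupport_energyFlux hsupp)
  rw [← (hflux x).deriv, flux_eq_zero, deriv_zero, Pi.zero_apply]

theorem eq_zero_of_divergenceFormOperator_eq_zero
    (hreg : IsDivergenceFormRegular b c u) (hsupp : HasCompactSupport u)
    (hker : ∀ x, divergenceFormOperator a b c u x = 0)
    (ha_nonneg : ∀ x, 0 ≤ a x) (hb_nonneg : ∀ x, 0 ≤ b x) (hc_pos : ∀ x, 0 < c x) : u = 0 := by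
  have low_order_nonneg (x : ℝ) : 0 ≤ a x * u x ^ 2 + b x * deriv u x ^ 2 :=
    add_nonneg (mul_nonneg (ha_nonneg x) (sq_nonneg _)) (mul_nonneg (hb_nonneg x) (sq_nonneg _))
  have top_order_nonneg (x : ℝ) : 0 ≤ c x * deriv (deriv u) x ^ 2 :=
    mul_nonneg (hc_pos x).le (sq_nonneg _)
  have density_eq_zero := energyDensity_eq_zero_of_divergenceFormOperator_eq_zero
    hreg hsupp hker fun x => add_nonneg (low_order_nonneg x) (top_order_nonneg x)
  refine eq_zero_of_deriv_deriv_eq_zero_of_hasCompactSupport hreg.differentiable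
    hreg.differentiable_deriv (fun x => ?_) hsupp
  have top_order_eq_zero : c x * deriv (deriv u) x ^ 2 = 0 :=
    ((add_eq_zero_iff_of_nonneg (low_order_nonneg x) (top_order_nonneg x)).1
      (density_eq_zero x)).2
  exact pow_eq_zero_iff two_ne_zero |>.1
    ((mul_eq_zero_iff_left (hc_pos x).ne').1 top_order_eq_zero)

end Energy

theorem operator_I_injective_general {ε : ℝ} (hε : 0 < ε) {h : ℝ → ℝ} (hh : Differentiable ℝ h)
    (hh_nonneg : ∀ x, 0 ≤ h x) {f : ℝ → ℝ} (hf : ContDiff ℝ 4 f) (hsupp : HasCompactSupport f)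
    (hker : ∀ x : ℝ,
      h x * f x - ε / 3 * deriv (fun y => (h y) ^ 3 * deriv f y) x
        + ε ^ 2 / 45 * deriv (deriv (deriv (deriv f))) x = 0) :
    f = 0 := by
  have hreg : IsDivergenceFormRegular (fun x => ε / 3 * h x ^ 3) (fun _ => ε ^ 2 / 45) f :=
    isDivergenceFormRegular_of_contDiff ((hh.pow 3).const_mul (ε / 3)) hf (ε ^ 2 / 45)
  have hker' (x : ℝ) : divergenceFormOperator h (fun x => ε / 3 * h x ^ 3)
      (fun _ => ε ^ 2 / 45) f x = 0 := by
    simpa only [divergenceFormOperator, mul_assoc, deriv_const_mul_field'] using hker x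
  exact eq_zero_of_divergenceFormOperator_eq_zero hreg hsupp hker' hh_nonneg
    (fun x => mul_nonneg (by positivity) (pow_nonneg (hh_nonneg x) 3)) (fun _ => by positivity)

theorem operator_I_injective (ε hmin : ℝ) (hε : 0 < ε) (hhmin : 0 < hmin)
    (h : ℝ → ℝ) (hh : ContDiff ℝ 2 h) (hhb : ∀ x : ℝ, hmin ≤ h x)
    (f : ℝ → ℝ) (hf : ContDiff ℝ 4 f) (hsupp : HasCompactSupport f)
    (hker : ∀ x : ℝ,
      h x * f x - ε / 3 * deriv (fun y => (h y) ^ 3 * deriv f y) x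
        + ε ^ 2 / 45 * deriv (deriv (deriv (deriv f))) x = 0) :
    ∀ x : ℝ, f x = 0 :=
  congrFun <| operator_I_injective_general hε (hh.differentiable two_ne_zero)
    (fun x => hhmin.le.trans (hhb x)) hf hsupp hker
end

section
/- Let 0 < ε ≤ 1 and let h : ℝ → ℝ be twice continuously differentiable with 0 < h_min ≤ h(x) ≤ h_max for all x. For ζ, v : ℝ → ℝ four times continuously differentiable with compact support, define E² = ∫_ℝ ζ·(J[h]ζ) dx + ∫_ℝ v·(ℑv) dx, where (J[h]ζ)(x) = ζ − ε²·d/dx[h⁻¹ζ'] + (2/45)ε²·d²/dx²[h⁻¹ζ''] and (ℑv)(x) = h v − (ε/3)·d/dx[h³ v'] + (ε²/45)·v'''', and define X = ∫_ℝ ζ² dx + ε²∫_ℝ (ζ')² dx + ε²∫_ℝ (ζ'')² dx + ∫_ℝ v² dx + ε∫_ℝ (v')² dx + ε²∫_ℝ (v'')² dx. Then there exist constants c₁, c₂ > 0, depending only on h_min and h_max and not on ε, ζ, v, such that c₁·X ≤ E² ≤ c₂·X. -/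
open MeasureTheory

/-!
Both diagonal entries of the symmetrizer have the divergence form
`f ↦ p₀ f - (p₁ f')' + (p₂ f'')''`, so integrating by parts turns the energy into
`∫ p₀ f² + ∫ p₁ (f')² + ∫ p₂ (f'')²`. The squared `X⁰`-norm is the same expression with constant
weights. The weights of the energy are comparable to these constants, because each power of `ε`
occurs in both with the same exponent and `h` stays between `hmin` and `hmax`.
-/

section IntegrationByParts

variable {A : Type*} [NormedRing A] [NormedAlgebra ℝ A] {f g : ℝ → A}

lemma integral_mul_deriv_eq_neg_of_hasCompactSupport (hf : ContDiff ℝ 1 f) (hg : ContDiff ℝ 1 g)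
    (hfs : HasCompactSupport f) :
    ∫ x, f x * deriv g x = -∫ x, deriv f x * g x := by
  have hf' := hf.continuous_deriv le_rfl
  have hg' := hg.continuous_deriv le_rfl
  exact integral_mul_deriv_eq_deriv_mul_of_integrable
    (fun x _ => (hf.differentiable one_ne_zero x).hasDerivAt)
    (fun x _ => (hg.differentiable one_ne_zero x).hasDerivAt)
    ((hf.continuous.mul hg').integrable_of_hasCompactSupport hfs.mul_right)
    ((hf'.mul hg.continuous).integrable_of_hasCompactSupport hfs.deriv.mul_right)
    ((hf.continuous.mul hg.continuous).integrable_of_hasCompactSupport hfs.mul_right)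

lemma integral_mul_deriv_deriv_of_hasCompactSupport (hf : ContDiff ℝ 2 f) (hg : ContDiff ℝ 2 g)
    (hfs : HasCompactSupport f) :
    ∫ x, f x * deriv (deriv g) x = ∫ x, deriv (deriv f) x * g x := by
  rw [integral_mul_deriv_eq_neg_of_hasCompactSupport (hf.of_le one_le_two) (hg.deriv' (n := 1))
      hfs,
    integral_mul_deriv_eq_neg_of_hasCompactSupport (hf.deriv' (n := 1)) (hg.of_le one_le_two)
      hfs.deriv, neg_neg]

end IntegrationByParts

lemma integral_mul_sq_mono {X : Type*} [TopologicalSpace X] [MeasurableSpace X]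
    [OpensMeasurableSpace X] {μ : Measure X} [IsFiniteMeasureOnCompacts μ] {p q f : X → ℝ}
    (hp : Continuous p) (hq : Continuous q) (hf : Continuous f) (hfs : HasCompactSupport f)
    (hpq : p ≤ q) :
    ∫ x, p x * f x ^ 2 ∂μ ≤ ∫ x, q x * f x ^ 2 ∂μ := by
  have integrable_mul_sq {w : X → ℝ} (hw : Continuous w) : Integrable (fun x => w x * f x ^ 2) μ :=
    (hw.mul (hf.pow 2)).integrable_of_hasCompactSupport
      ((hfs.comp_left (zero_pow two_ne_zero)).mul_left)
  exact integral_mono (integrable_mul_sq hp) (integrable_mul_sq hq)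
    fun x => mul_le_mul_of_nonneg_right (hpq x) (sq_nonneg _)

/-- The symmetric fourth-order operator `f ↦ p₀ f - (p₁ f')' + (p₂ f'')''` on the line, the common
form of the two diagonal entries of the symmetrizer. -/
noncomputable def fourthOrderOp (p₀ p₁ p₂ f : ℝ → ℝ) (x : ℝ) : ℝ :=
  p₀ x * f x - deriv (fun y => p₁ y * deriv f y) x
    + deriv (deriv fun y => p₂ y * deriv (deriv f) y) x

/-- The quadratic form `∫ p₀ f² + ∫ p₁ (f')² + ∫ p₂ (f'')²` of `fourthOrderOp p₀ p₁ p₂`. Constant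
weights give weighted Sobolev norms. -/
noncomputable def energyForm (p₀ p₁ p₂ f : ℝ → ℝ) : ℝ :=
  (∫ x, p₀ x * f x ^ 2) + (∫ x, p₁ x * deriv f x ^ 2) + ∫ x, p₂ x * deriv (deriv f) x ^ 2

section EnergyForm

variable {p₀ p₁ p₂ q₀ q₁ q₂ f : ℝ → ℝ}

theorem integral_mul_fourthOrderOp (hp₀ : Continuous p₀) (hp₁ : ContDiff ℝ 1 p₁)
    (hp₂ : ContDiff ℝ 2 p₂) (hf : ContDiff ℝ 4 f) (hfs : HasCompactSupport f) :
    ∫ x, f x * fourthOrderOp p₀ p₁ p₂ f x = energyForm p₀ p₁ p₂ f := by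
  have hf' : ContDiff ℝ 3 (deriv f) := hf.deriv' (n := 3)
  have hf'' : ContDiff ℝ 2 (deriv (deriv f)) := hf'.deriv' (n := 2)
  have hflux₁ : ContDiff ℝ 1 fun y => p₁ y * deriv f y := hp₁.mul (hf'.of_le (by norm_num))
  have hflux₂ : ContDiff ℝ 2 fun y => p₂ y * deriv (deriv f) y := hp₂.mul hf''
  have integrable_mul {g : ℝ → ℝ} (hg : Continuous g) : Integrable fun x => f x * g x :=
    (hf.continuous.mul hg).integrable_of_hasCompactSupport hfs.mul_right
  have hint₀ : Integrable fun x => f x * (p₀ x * f x) := integrable_mul (hp₀.mul hf.continuous)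
  have hint₁ := integrable_mul (hflux₁.continuous_deriv le_rfl)
  have hint₂ := integrable_mul ((hflux₂.deriv' (n := 1)).continuous_deriv le_rfl)
  simp only [fourthOrderOp, mul_add, mul_sub]
  rw [integral_add (by exact hint₀.sub hint₁) hint₂, integral_sub hint₀ hint₁,
    integral_mul_deriv_eq_neg_of_hasCompactSupport (hf.of_le (by norm_num)) hflux₁ hfs,
    integral_mul_deriv_deriv_of_hasCompactSupport (hf.of_le (by norm_num)) hflux₂ hfs,
    sub_neg_eq_add]
  simp only [energyForm, sq, mul_left_comm]

lemma energyForm_mono (hf : ContDiff ℝ 2 f) (hfs : HasCompactSupport f) (h₀ : p₀ ≤ q₀)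
    (h₁ : p₁ ≤ q₁) (h₂ : p₂ ≤ q₂) (hp₀ : Continuous p₀ := by fun_prop)
    (hp₁ : Continuous p₁ := by fun_prop) (hp₂ : Continuous p₂ := by fun_prop)
    (hq₀ : Continuous q₀ := by fun_prop) (hq₁ : Continuous q₁ := by fun_prop)
    (hq₂ : Continuous q₂ := by fun_prop) :
    energyForm p₀ p₁ p₂ f ≤ energyForm q₀ q₁ q₂ f := by
  have hf' : ContDiff ℝ 1 (deriv f) := hf.deriv' (n := 1)
  exact add_le_add_three (integral_mul_sq_mono hp₀ hq₀ hf.continuous hfs h₀)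
    (integral_mul_sq_mono hp₁ hq₁ hf'.continuous hfs.deriv h₁)
    (integral_mul_sq_mono hp₂ hq₂ (hf'.continuous_deriv le_rfl) hfs.deriv.deriv h₂)

lemma energyForm_const (a b c : ℝ) :
    energyForm (fun _ => a) (fun _ => b) (fun _ => c) f =
      a * (∫ x, f x ^ 2) + b * (∫ x, deriv f x ^ 2) + c * ∫ x, deriv (deriv f) x ^ 2 := by
  simp only [energyForm, integral_const_mul]

end EnergyForm

/-- The entry `J[h]` of the symmetrizer, acting on the surface elevation `ζ`. -/
noncomputable def boussinesqJ (ε : ℝ) (h ζ : ℝ → ℝ) (x : ℝ) : ℝ :=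
  ζ x - ε ^ 2 * deriv (fun y => (h y)⁻¹ * deriv ζ y) x
    + 2 / 45 * ε ^ 2 * deriv (deriv (fun y => (h y)⁻¹ * deriv (deriv ζ) y)) x

/-- The entry `ℑ` of the symmetrizer, acting on the velocity `v`. -/
noncomputable def boussinesqI (ε : ℝ) (h v : ℝ → ℝ) (x : ℝ) : ℝ :=
  h x * v x - ε / 3 * deriv (fun y => (h y) ^ 3 * deriv v y) x
    + ε ^ 2 / 45 * deriv (deriv (deriv (deriv v))) x

/-- The squared natural energy `(U, S U)` of `U = (ζ, v)`, where `S = diag(J[h], ℑ)`. -/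
noncomputable def boussinesqEnergySq (ε : ℝ) (h ζ v : ℝ → ℝ) : ℝ :=
  (∫ x : ℝ, ζ x * boussinesqJ ε h ζ x) + ∫ x : ℝ, v x * boussinesqI ε h v x

/-- The squared `X⁰`-norm of `(ζ, v)`. -/
noncomputable def boussinesqNormSq (ε : ℝ) (ζ v : ℝ → ℝ) : ℝ :=
  (∫ x : ℝ, (ζ x) ^ 2) + ε ^ 2 * (∫ x : ℝ, (deriv ζ x) ^ 2)
    + ε ^ 2 * (∫ x : ℝ, (deriv (deriv ζ) x) ^ 2) + (∫ x : ℝ, (v x) ^ 2)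
    + ε * (∫ x : ℝ, (deriv v x) ^ 2) + ε ^ 2 * (∫ x : ℝ, (deriv (deriv v) x) ^ 2)

section Boussinesq

variable {ε c : ℝ} {h ζ v : ℝ → ℝ}

lemma boussinesqJ_eq_fourthOrderOp :
    boussinesqJ ε h ζ =
      fourthOrderOp (fun _ => 1) (fun x => ε ^ 2 * (h x)⁻¹) (fun x => 2 / 45 * ε ^ 2 * (h x)⁻¹)
        ζ := by
  ext x
  simp only [boussinesqJ, fourthOrderOp, one_mul, mul_assoc _ (h _)⁻¹, deriv_const_mul_field']

lemma boussinesqI_eq_fourthOrderOp :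
    boussinesqI ε h v =
      fourthOrderOp h (fun x => ε / 3 * h x ^ 3) (fun _ => ε ^ 2 / 45) v := by
  ext x
  simp only [boussinesqI, fourthOrderOp, mul_assoc _ (h _ ^ 3), deriv_const_mul_field']

theorem boussinesqEnergySq_eq_energyForm_add (hh : ContDiff ℝ 2 h) (hne : ∀ x, h x ≠ 0)
    (hζ : ContDiff ℝ 4 ζ) (hζs : HasCompactSupport ζ) (hv : ContDiff ℝ 4 v)
    (hvs : HasCompactSupport v) :
    boussinesqEnergySq ε h ζ v =
      energyForm (fun _ => 1) (fun x => ε ^ 2 * (h x)⁻¹) (fun x => 2 / 45 * ε ^ 2 * (h x)⁻¹) ζ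
        + energyForm h (fun x => ε / 3 * h x ^ 3) (fun _ => ε ^ 2 / 45) v := by
  have hinv : ContDiff ℝ 2 fun x => (h x)⁻¹ := hh.inv hne
  have hcube : ContDiff ℝ 2 fun x => h x ^ 3 := hh.pow 3
  rw [boussinesqEnergySq, boussinesqJ_eq_fourthOrderOp, boussinesqI_eq_fourthOrderOp,
    integral_mul_fourthOrderOp continuous_const
      (contDiff_const.mul (hinv.of_le one_le_two)) (contDiff_const.mul hinv) hζ hζs,
    integral_mul_fourthOrderOp hh.continuous
      (contDiff_const.mul (hcube.of_le one_le_two)) contDiff_const hv hvs]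

lemma mul_boussinesqNormSq_eq_energyForm_add :
    c * boussinesqNormSq ε ζ v =
      energyForm (fun _ => c) (fun _ => c * ε ^ 2) (fun _ => c * ε ^ 2) ζ
        + energyForm (fun _ => c) (fun _ => c * ε) (fun _ => c * ε ^ 2) v := by
  rw [energyForm_const, energyForm_const, boussinesqNormSq]
  ring

theorem mul_boussinesqNormSq_le_energySq (hε : 0 ≤ ε) (hh : ContDiff ℝ 2 h)
    (hpos : ∀ x, 0 < h x) (hζ : ContDiff ℝ 4 ζ) (hζs : HasCompactSupport ζ)
    (hv : ContDiff ℝ 4 v) (hvs : HasCompactSupport v) (hc : c ≤ 1 / 45) (hch : ∀ x, c ≤ h x)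
    (hc_inv : ∀ x, c ≤ 2 / 45 * (h x)⁻¹) (hc_cube : ∀ x, c ≤ h x ^ 3 / 3) :
    c * boussinesqNormSq ε ζ v ≤ boussinesqEnergySq ε h ζ v := by
  have hne x : h x ≠ 0 := (hpos x).ne'
  rw [boussinesqEnergySq_eq_energyForm_add hh hne hζ hζs hv hvs,
    mul_boussinesqNormSq_eq_energyForm_add]
  refine add_le_add
    (energyForm_mono (hζ.of_le (by norm_num)) hζs (fun _ => ?_) (fun x => ?_) (fun x => ?_))
    (energyForm_mono (hv.of_le (by norm_num)) hvs hch (fun x => ?_) (fun _ => ?_))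
  · linarith
  · have : 0 < (h x)⁻¹ := inv_pos.2 (hpos x)
    have : c ≤ (h x)⁻¹ := by linarith [hc_inv x]
    linarith [mul_le_mul_of_nonneg_left this (sq_nonneg ε)]
  · linarith [mul_le_mul_of_nonneg_left (hc_inv x) (sq_nonneg ε)]
  · linarith [mul_le_mul_of_nonneg_left (hc_cube x) hε]
  · linarith [mul_le_mul_of_nonneg_left hc (sq_nonneg ε)]

theorem boussinesqEnergySq_le_mul_normSq (hε : 0 ≤ ε) (hh : ContDiff ℝ 2 h)
    (hne : ∀ x, h x ≠ 0) (hζ : ContDiff ℝ 4 ζ) (hζs : HasCompactSupport ζ)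
    (hv : ContDiff ℝ 4 v) (hvs : HasCompactSupport v) (hc : 1 ≤ c) (hch : ∀ x, h x ≤ c)
    (hc_inv : ∀ x, (h x)⁻¹ ≤ c) (hc_cube : ∀ x, h x ^ 3 ≤ c) :
    boussinesqEnergySq ε h ζ v ≤ c * boussinesqNormSq ε ζ v := by
  rw [boussinesqEnergySq_eq_energyForm_add hh hne hζ hζs hv hvs,
    mul_boussinesqNormSq_eq_energyForm_add]
  refine add_le_add
    (energyForm_mono (hζ.of_le (by norm_num)) hζs (fun _ => hc) (fun x => ?_) (fun x => ?_))
    (energyForm_mono (hv.of_le (by norm_num)) hvs hch (fun x => ?_) (fun _ => ?_))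
  · linarith [mul_le_mul_of_nonneg_left (hc_inv x) (sq_nonneg ε)]
  · have : 2 / 45 * (h x)⁻¹ ≤ c := by linarith [hc_inv x]
    linarith [mul_le_mul_of_nonneg_left this (sq_nonneg ε)]
  · have : h x ^ 3 / 3 ≤ c := by linarith [hc_cube x]
    linarith [mul_le_mul_of_nonneg_left this hε]
  · have : 1 / 45 ≤ c := by linarith
    linarith [mul_le_mul_of_nonneg_left this (sq_nonneg ε)]

end Boussinesq

theorem energy_norm_equivalence_general (hmin hmax : ℝ) (hhmin : 0 < hmin) (hle : hmin ≤ hmax) :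
    ∃ c₁ > (0 : ℝ), ∃ c₂ > (0 : ℝ), ∀ ε : ℝ, 0 ≤ ε →
      ∀ h : ℝ → ℝ, ContDiff ℝ 2 h → (∀ x, hmin ≤ h x) → (∀ x, h x ≤ hmax) →
      ∀ ζ v : ℝ → ℝ, ContDiff ℝ 4 ζ → HasCompactSupport ζ →
        ContDiff ℝ 4 v → HasCompactSupport v →
      c₁ * boussinesqNormSq ε ζ v ≤ boussinesqEnergySq ε h ζ v ∧
        boussinesqEnergySq ε h ζ v ≤ c₂ * boussinesqNormSq ε ζ v := by
  have hhmax : 0 < hmax := hhmin.trans_le hle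
  refine ⟨min (1 / 45) (min hmin (min (2 / 45 * hmax⁻¹) (hmin ^ 3 / 3))), by positivity,
    max 1 (max hmax (max hmin⁻¹ (hmax ^ 3))), by positivity, ?_⟩
  intro ε hε h hh hlow hup ζ v hζ hζs hv hvs
  have hpos x : 0 < h x := hhmin.trans_le (hlow x)
  have hinv_low x : hmax⁻¹ ≤ (h x)⁻¹ := inv_anti₀ (hpos x) (hup x)
  have hinv_up x : (h x)⁻¹ ≤ hmin⁻¹ := inv_anti₀ hhmin (hlow x)
  have hcube_low x : hmin ^ 3 ≤ h x ^ 3 := pow_le_pow_left₀ hhmin.le (hlow x) 3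
  have hcube_up x : h x ^ 3 ≤ hmax ^ 3 := pow_le_pow_left₀ (hpos x).le (hup x) 3
  constructor
  · refine mul_boussinesqNormSq_le_energySq hε hh hpos hζ hζs hv hvs (min_le_left _ _)
      (fun x => ?_) (fun x => ?_) (fun x => ?_)
    · simp only [min_le_iff, hlow x, true_or, or_true]
    · have : 2 / 45 * hmax⁻¹ ≤ 2 / 45 * (h x)⁻¹ :=
        mul_le_mul_of_nonneg_left (hinv_low x) (by norm_num)
      simp only [min_le_iff, this, true_or, or_true]
    · have : hmin ^ 3 / 3 ≤ h x ^ 3 / 3 :=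
        div_le_div_of_nonneg_right (hcube_low x) zero_le_three
      simp only [min_le_iff, this, or_true]
  · refine boussinesqEnergySq_le_mul_normSq hε hh (fun x => (hpos x).ne') hζ hζs hv hvs
      (le_max_left _ _) (fun x => ?_) (fun x => ?_) (fun x => ?_)
    · simp only [le_max_iff, hup x, true_or, or_true]
    · simp only [le_max_iff, hinv_up x, true_or, or_true]
    · simp only [le_max_iff, hcube_up x, or_true]

theorem energy_norm_equivalence (hmin hmax : ℝ) (hhmin : 0 < hmin) (hle : hmin ≤ hmax) :
    ∃ c₁ > (0:ℝ), ∃ c₂ > (0:ℝ),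
      ∀ ε : ℝ, 0 < ε → ε ≤ 1 →
      ∀ h : ℝ → ℝ, ContDiff ℝ 2 h → (∀ x : ℝ, hmin ≤ h x) → (∀ x : ℝ, h x ≤ hmax) →
      ∀ ζ v : ℝ → ℝ, ContDiff ℝ 4 ζ → HasCompactSupport ζ →
        ContDiff ℝ 4 v → HasCompactSupport v →
      let Jζ : ℝ → ℝ := fun x =>
        ζ x - ε ^ 2 * deriv (fun y => (h y)⁻¹ * deriv ζ y) x
          + 2 / 45 * ε ^ 2 * deriv (deriv (fun y => (h y)⁻¹ * deriv (deriv ζ) y)) x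
      let Iv : ℝ → ℝ := fun x =>
        h x * v x - ε / 3 * deriv (fun y => (h y) ^ 3 * deriv v y) x
          + ε ^ 2 / 45 * deriv (deriv (deriv (deriv v))) x
      let E2 : ℝ := (∫ x : ℝ, ζ x * Jζ x) + ∫ x : ℝ, v x * Iv x
      let X : ℝ := (∫ x : ℝ, (ζ x) ^ 2) + ε ^ 2 * (∫ x : ℝ, (deriv ζ x) ^ 2)
        + ε ^ 2 * (∫ x : ℝ, (deriv (deriv ζ) x) ^ 2) + (∫ x : ℝ, (v x) ^ 2)
        + ε * (∫ x : ℝ, (deriv v x) ^ 2) + ε ^ 2 * (∫ x : ℝ, (deriv (deriv v) x) ^ 2)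
      c₁ * X ≤ E2 ∧ E2 ≤ c₂ * X := by
  obtain ⟨c₁, hc₁, c₂, hc₂, hequiv⟩ := energy_norm_equivalence_general hmin hmax hhmin hle
  exact ⟨c₁, hc₁, c₂, hc₂, fun ε hε _ => hequiv ε hε.le⟩
end

section
/- Let 0 < ε ≤ 1, T > 0 and M > 0. Let ζ₁, v₁, ζ₂, v₂ : [0,T] × ℝ → ℝ be smooth functions such that: (i) ∂_t v₁ − (ε/3)∂_x²∂_t v₁ + ∂_x ζ₁ + ε v₁ ∂_x v₁ = 0 at every point; (ii) ∂_t v₂ + ∂_x ζ₂ = f at every point, where f = ∂_x ζ₁ · ∂_x∂_t v₁ + (2/3)·ζ₁·∂_x²∂_t v₁ + (1/45)·∂_x⁴∂_t v₁ + (1/3)·∂_x(v₁·∂_x²v₁ − (∂_x v₁)²); (iii) all partial derivatives in t and x of ζ₁, v₁, ζ₂, v₂ of total order ≤ 6 are bounded in absolute value by M on [0,T] × ℝ; (iv) 1 + ε·ζ(t,x) ≥ 1/2 on [0,T] × ℝ, where ζ = ζ₁ + ε²ζ₂ and v = v₁ + ε²v₂. Then there exists a constant C > 0, depending only on M (and not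 on ε or T), such that for all (t,x) ∈ [0,T] × ℝ: |∂_t v − (ε/(3(1+εζ)))·∂_x((1+3εζ)·∂_x∂_t v) − (ε²/45)·∂_x⁴∂_t v + ∂_x ζ + ε v ∂_x v − (ε²/3)·∂_x(v·∂_x²v − (∂_x v)²)| ≤ C·ε³. -/
/-!
Expanding `1/h` to second order in `ε` rewrites the extended momentum operator *exactly* as

  `extended = standard - ε² f + ε³ (ζ/h) (∂ₓζ ∂ₓ∂ₜv + (2/3) ζ ∂ₓ²∂ₜv)`,

where `f` is the source of the corrector equation, evaluated at the same `(ζ, v)`. Evaluate this at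
`(ζ₁, v₁) + ε² (ζ₂, v₂)`. By linearity, the standard operator contributes `ε² (∂ₜv₂ + ∂ₓζ₂)` up to
`O(ε³)`. Since `f` is a linear plus a quadratic expression, it changes only by `O(ε²)`, so
`ε² f` equals `ε² f(ζ₁, v₁)` up to `O(ε⁴)`. The corrector equation cancels these two contributions.
-/

section

variable {𝕜 E F : Type*} [NontriviallyNormedField 𝕜] [NormedAddCommGroup E] [NormedSpace 𝕜 E]
  [NormedAddCommGroup F] [NormedSpace 𝕜 F] {U : E → F} {n : ℕ}

theorem differentiable_of_contDiff_succ (hU : ContDiff 𝕜 (n + 1 : ℕ) U) : Differentiable 𝕜 U :=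
  hU.differentiable (by simp)

theorem norm_iteratedFDeriv_fderiv_apply_le (hU : ContDiff 𝕜 (n + 1 : ℕ) U) (e p : E) :
    ‖iteratedFDeriv 𝕜 n (fun q => fderiv 𝕜 U q e) p‖ ≤ ‖e‖ * ‖iteratedFDeriv 𝕜 (n + 1) U p‖ := by
  rw [← norm_iteratedFDeriv_fderiv]
  exact norm_iteratedFDeriv_clm_apply_const (hU.fderiv_right le_rfl).contDiffAt le_rfl

end

theorem abs_add_add_mul_le {a b c d K : ℝ} (ha : |a| ≤ K) (hb : |b| ≤ K) (hd : |d| ≤ K)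
    (hc : |c| ≤ 1) : |a + b + c * d| ≤ 3 * K := by
  have hcd : |c * d| ≤ K := by
    rw [abs_mul]
    exact (mul_le_of_le_one_left (abs_nonneg d) hc).trans hd
  linarith [abs_add_three a b (c * d)]

section

open Function (uncurry)

variable {u w ζ v ζ₁ ζ₂ v₁ v₂ : ℝ → ℝ → ℝ} {M N ε c t x : ℝ} {n k : ℕ}

theorem hasDerivAt_fderiv_snd (hu : DifferentiableAt ℝ (uncurry u) (t, x)) :
    HasDerivAt (u t) (fderiv ℝ (uncurry u) (t, x) (0, 1)) x :=
  hu.hasFDerivAt.comp_hasDerivAt (f := fun y => (t, y)) x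
    ((hasDerivAt_const x t).prodMk (hasDerivAt_id x))

theorem hasDerivAt_fderiv_fst (hu : DifferentiableAt ℝ (uncurry u) (t, x)) :
    HasDerivAt (fun s => u s x) (fderiv ℝ (uncurry u) (t, x) (1, 0)) t :=
  hu.hasFDerivAt.comp_hasDerivAt (f := fun s => (s, x)) t
    ((hasDerivAt_id t).prodMk (hasDerivAt_const t x))

theorem hasDerivAt_px (hu : DifferentiableAt ℝ (uncurry u) (t, x)) :
    HasDerivAt (u t) (px u t x) x :=
  (hasDerivAt_fderiv_snd hu).differentiableAt.hasDerivAt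

theorem hasDerivAt_pt (hu : DifferentiableAt ℝ (uncurry u) (t, x)) :
    HasDerivAt (fun s => u s x) (pt u t x) t :=
  (hasDerivAt_fderiv_fst hu).differentiableAt.hasDerivAt

theorem uncurry_px (hu : Differentiable ℝ (uncurry u)) :
    uncurry (px u) = fun p => fderiv ℝ (uncurry u) p (0, 1) :=
  funext fun p => (hasDerivAt_fderiv_snd (hu p)).deriv

theorem uncurry_pt (hu : Differentiable ℝ (uncurry u)) :
    uncurry (pt u) = fun p => fderiv ℝ (uncurry u) p (1, 0) :=
  funext fun p => (hasDerivAt_fderiv_fst (hu p)).deriv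

theorem contDiff_px (hu : ContDiff ℝ (n + 1 : ℕ) (uncurry u)) :
    ContDiff ℝ n (uncurry (px u)) := by
  rw [uncurry_px (differentiable_of_contDiff_succ hu)]
  exact (hu.fderiv_right le_rfl).clm_apply contDiff_const

theorem contDiff_pt (hu : ContDiff ℝ (n + 1 : ℕ) (uncurry u)) :
    ContDiff ℝ n (uncurry (pt u)) := by
  rw [uncurry_pt (differentiable_of_contDiff_succ hu)]
  exact (hu.fderiv_right le_rfl).clm_apply contDiff_const

theorem px_add_smul (hu : Differentiable ℝ (uncurry u)) (hw : Differentiable ℝ (uncurry w))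
    (c : ℝ) : px (u + c • w) = px u + c • px w :=
  funext₂ fun t x =>
    ((hasDerivAt_px (hu (t, x))).add ((hasDerivAt_px (hw (t, x))).const_mul c)).deriv

theorem pt_add_smul (hu : Differentiable ℝ (uncurry u)) (hw : Differentiable ℝ (uncurry w))
    (c : ℝ) : pt (u + c • w) = pt u + c • pt w :=
  funext₂ fun t x =>
    ((hasDerivAt_pt (hu (t, x))).add ((hasDerivAt_pt (hw (t, x))).const_mul c)).deriv

theorem iterate_px_add_smul (hu : ContDiff ℝ n (uncurry u)) (hw : ContDiff ℝ n (uncurry w))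
    (c : ℝ) : px^[n] (u + c • w) = px^[n] u + c • px^[n] w := by
  induction n generalizing u w with
  | zero => rfl
  | succ n ih =>
    simp only [Function.iterate_succ_apply]
    rw [px_add_smul (differentiable_of_contDiff_succ hu) (differentiable_of_contDiff_succ hw),
      ih (contDiff_px hu) (contDiff_px hw)]

theorem iterate_px_pt_add_smul (hu : ContDiff ℝ (n + 1 : ℕ) (uncurry u))
    (hw : ContDiff ℝ (n + 1 : ℕ) (uncurry w)) (c : ℝ) :
    px^[n] (pt (u + c • w)) = px^[n] (pt u) + c • px^[n] (pt w) := by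
  rw [pt_add_smul (differentiable_of_contDiff_succ hu) (differentiable_of_contDiff_succ hw),
    iterate_px_add_smul (contDiff_pt hu) (contDiff_pt hw)]

/-- `u` is of class `C^n`, and its total derivatives of order at most `n`, in operator norm, are
bounded by `M` at the single point `(t, x)`. These are the bounds under which the remainders of the
consistency estimate are controlled. -/
structure BoundedDerivsAt (M : ℝ) (n : ℕ) (u : ℝ → ℝ → ℝ) (t x : ℝ) : Prop where
  contDiff : ContDiff ℝ n (uncurry u)
  norm_le : ∀ k ≤ n, ‖iteratedFDeriv ℝ k (uncurry u) (t, x)‖ ≤ M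

namespace BoundedDerivsAt

theorem of_contDiff_top {m : ℕ} (hu : ContDiff ℝ (⊤ : ℕ∞) (uncurry u))
    (h : ∀ k ≤ m, ‖iteratedFDeriv ℝ k (uncurry u) (t, x)‖ ≤ M) (hnm : n ≤ m) :
    BoundedDerivsAt M n u t x :=
  ⟨hu.of_le (by exact_mod_cast le_top), fun k hk => h k (hk.trans hnm)⟩

theorem mono (h : BoundedDerivsAt M n u t x) (hkn : k ≤ n) : BoundedDerivsAt M k u t x :=
  ⟨h.contDiff.of_le (by exact_mod_cast hkn), fun i hi => h.norm_le i (hi.trans hkn)⟩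

theorem abs_le (h : BoundedDerivsAt M n u t x) : |u t x| ≤ M := by
  simpa using h.norm_le 0 n.zero_le

protected theorem px (h : BoundedDerivsAt M (n + 1) u t x) : BoundedDerivsAt M n (px u) t x where
  contDiff := contDiff_px h.contDiff
  norm_le k hk := by
    rw [uncurry_px (differentiable_of_contDiff_succ h.contDiff)]
    have hbound := norm_iteratedFDeriv_fderiv_apply_le
      (h.mono (Nat.succ_le_succ hk)).contDiff (0, 1) (t, x)
    exact (hbound.trans_eq (by simp)).trans (h.norm_le (k + 1) (Nat.succ_le_succ hk))

protected theorem pt (h : BoundedDerivsAt M (n + 1) u t x) : BoundedDerivsAt M n (pt u) t x where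
  contDiff := contDiff_pt h.contDiff
  norm_le k hk := by
    rw [uncurry_pt (differentiable_of_contDiff_succ h.contDiff)]
    have hbound := norm_iteratedFDeriv_fderiv_apply_le
      (h.mono (Nat.succ_le_succ hk)).contDiff (1, 0) (t, x)
    exact (hbound.trans_eq (by simp)).trans (h.norm_le (k + 1) (Nat.succ_le_succ hk))

theorem abs_iterate_px_le (h : BoundedDerivsAt M n u t x) : |px^[n] u t x| ≤ M := by
  induction n generalizing u with
  | zero => exact h.abs_le
  | succ n ih => exact ih h.px

theorem abs_iterate_px_pt_le (h : BoundedDerivsAt M (n + 1) u t x) :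
    |px^[n] (pt u) t x| ≤ M :=
  h.pt.abs_iterate_px_le

theorem add_smul (hu : BoundedDerivsAt M n u t x) (hw : BoundedDerivsAt N n w t x)
    (hc : |c| ≤ 1) : BoundedDerivsAt (M + N) n (u + c • w) t x where
  contDiff := hu.contDiff.add (hw.contDiff.const_smul c)
  norm_le k hk := by
    have hu' := (hu.mono hk).contDiff.contDiffAt (x := (t, x))
    have hw' := (hw.mono hk).contDiff.contDiffAt (x := (t, x))
    have hcw : ‖c • iteratedFDeriv ℝ k (uncurry w) (t, x)‖ ≤ N := by
      rw [norm_smul]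
      exact (mul_le_of_le_one_left (norm_nonneg _) hc).trans (hw.norm_le k hk)
    have hexpand : iteratedFDeriv ℝ k (uncurry (u + c • w)) (t, x)
        = iteratedFDeriv ℝ k (uncurry u) (t, x) + c • iteratedFDeriv ℝ k (uncurry w) (t, x) := by
      rw [← iteratedFDeriv_const_smul_apply hw']
      exact iteratedFDeriv_add_apply hu' (hw'.const_smul c)
    rw [hexpand]
    exact (norm_add_le _ _).trans (add_le_add (hu.norm_le k hk) hcw)

end BoundedDerivsAt

/-- The left-hand side of the standard Boussinesq momentum equation. -/
noncomputable def boussinesqMomentum (ε : ℝ) (ζ v : ℝ → ℝ → ℝ) (t x : ℝ) : ℝ :=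
  pt v t x - ε / 3 * px^[2] (pt v) t x + px ζ t x + ε * v t x * px v t x

/-- The left-hand side of the extended Boussinesq momentum equation, with the operators `T[ζ]`,
`𝔗` and `Q` written out. At points where `1 + ε * ζ t x = 0` the dispersive term is a junk value. -/
noncomputable def extendedMomentum (ε : ℝ) (ζ v : ℝ → ℝ → ℝ) (t x : ℝ) : ℝ :=
  pt v t x
    - ε / (3 * (1 + ε * ζ t x)) * px (fun t x => (1 + 3 * ε * ζ t x) * px (pt v) t x) t x
    - ε ^ 2 / 45 * px^[4] (pt v) t x
    + px ζ t x + ε * v t x * px v t x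
    - ε ^ 2 / 3 * px (fun t x => v t x * px^[2] v t x - (px v t x) ^ 2) t x

/-- The part of the corrector source that is bilinear in `(ζ, v)`; it is the `ε²`-coefficient of
`-ε T[ζ] ∂ₜv`. -/
noncomputable def dispersiveCoupling (ζ v : ℝ → ℝ → ℝ) (t x : ℝ) : ℝ :=
  px ζ t x * px (pt v) t x + 2 / 3 * ζ t x * px^[2] (pt v) t x

/-- The source `f(ζ, v)` of the corrector equation `∂ₜv₂ + ∂ₓζ₂ = f(ζ₁, v₁)`. -/
noncomputable def correctorSource (ζ v : ℝ → ℝ → ℝ) (t x : ℝ) : ℝ :=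
  dispersiveCoupling ζ v t x + 1 / 45 * px^[4] (pt v) t x
    + 1 / 3 * px (fun t x => v t x * px^[2] v t x - (px v t x) ^ 2) t x

/-- The bilinear form whose diagonal value at `(v, v)` is `∂ₓ(v ∂ₓ²v - (∂ₓv)²) = -3 Q v`. -/
noncomputable def velocityCoupling (u w : ℝ → ℝ → ℝ) (t x : ℝ) : ℝ :=
  u t x * px^[3] w t x - px u t x * px^[2] w t x

theorem px_mul_px_px_sub_px_sq (hv : ContDiff ℝ (3 : ℕ) (uncurry v)) (t x : ℝ) :
    px (fun t x => v t x * px^[2] v t x - (px v t x) ^ 2) t x = velocityCoupling v v t x := by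
  have hv₁ := contDiff_px hv
  have hv₂ := contDiff_px hv₁
  have hderiv :=
    ((hasDerivAt_px (differentiable_of_contDiff_succ hv (t, x))).mul
      (hasDerivAt_px (differentiable_of_contDiff_succ hv₂ (t, x)))).sub
    ((hasDerivAt_px (differentiable_of_contDiff_succ hv₁ (t, x))).pow 2)
  refine hderiv.deriv.trans ?_
  simp only [velocityCoupling, Function.iterate_succ_apply, Function.iterate_zero_apply]
  ring

theorem px_one_add_mul_mul (hζ : DifferentiableAt ℝ (uncurry ζ) (t, x))
    (hw : DifferentiableAt ℝ (uncurry w) (t, x)) (c : ℝ) :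
    px (fun t x => (1 + c * ζ t x) * w t x) t x
      = c * px ζ t x * w t x + (1 + c * ζ t x) * px w t x :=
  ((((hasDerivAt_px hζ).const_mul c).const_add 1).mul (hasDerivAt_px hw)).deriv

theorem extendedMomentum_eq (hζ : DifferentiableAt ℝ (uncurry ζ) (t, x))
    (hv : ContDiff ℝ (3 : ℕ) (uncurry v)) (hdepth : 1 + ε * ζ t x ≠ 0) :
    extendedMomentum ε ζ v t x
      = boussinesqMomentum ε ζ v t x - ε ^ 2 * correctorSource ζ v t x
        + ε ^ 3 * (ζ t x / (1 + ε * ζ t x) * dispersiveCoupling ζ v t x) := by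
  have hpxpt : DifferentiableAt ℝ (uncurry (px (pt v))) (t, x) :=
    differentiable_of_contDiff_succ (contDiff_px (contDiff_pt hv)) (t, x)
  have hiter : px (px (pt v)) = px^[2] (pt v) := rfl
  rw [extendedMomentum, px_one_add_mul_mul hζ hpxpt, hiter, boussinesqMomentum, correctorSource,
    dispersiveCoupling]
  field_simp
  ring

theorem boussinesqMomentum_add_smul (hζ₁ : Differentiable ℝ (uncurry ζ₁))
    (hζ₂ : Differentiable ℝ (uncurry ζ₂)) (hv₁ : ContDiff ℝ (3 : ℕ) (uncurry v₁))
    (hv₂ : ContDiff ℝ (3 : ℕ) (uncurry v₂)) :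
    boussinesqMomentum ε (ζ₁ + c • ζ₂) (v₁ + c • v₂) t x
      = boussinesqMomentum ε ζ₁ v₁ t x + c * (pt v₂ t x + px ζ₂ t x)
        + ε * c * (-(1 / 3) * px^[2] (pt v₂) t x
          + (v₂ t x * px v₁ t x + v₁ t x * px v₂ t x + c * (v₂ t x * px v₂ t x))) := by
  have dv₁ := differentiable_of_contDiff_succ hv₁
  have dv₂ := differentiable_of_contDiff_succ hv₂
  simp only [boussinesqMomentum, px_add_smul hζ₁ hζ₂, px_add_smul dv₁ dv₂,
    pt_add_smul dv₁ dv₂, iterate_px_add_smul (contDiff_pt hv₁) (contDiff_pt hv₂), Pi.add_apply,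
    Pi.smul_apply, smul_eq_mul]
  ring

theorem dispersiveCoupling_add_smul (hζ₁ : Differentiable ℝ (uncurry ζ₁))
    (hζ₂ : Differentiable ℝ (uncurry ζ₂)) (hv₁ : ContDiff ℝ (3 : ℕ) (uncurry v₁))
    (hv₂ : ContDiff ℝ (3 : ℕ) (uncurry v₂)) :
    dispersiveCoupling (ζ₁ + c • ζ₂) (v₁ + c • v₂) t x
      = dispersiveCoupling ζ₁ v₁ t x + c * (dispersiveCoupling ζ₂ v₁ t x
        + dispersiveCoupling ζ₁ v₂ t x + c * dispersiveCoupling ζ₂ v₂ t x) := by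
  have hpxpt : px (pt (v₁ + c • v₂)) = px (pt v₁) + c • px (pt v₂) :=
    iterate_px_pt_add_smul (n := 1) (hv₁.of_le (by norm_num)) (hv₂.of_le (by norm_num)) c
  simp only [dispersiveCoupling, px_add_smul hζ₁ hζ₂, hpxpt, iterate_px_pt_add_smul hv₁ hv₂,
    Pi.add_apply, Pi.smul_apply, smul_eq_mul]
  ring

theorem velocityCoupling_add_smul (hv₁ : ContDiff ℝ (3 : ℕ) (uncurry v₁))
    (hv₂ : ContDiff ℝ (3 : ℕ) (uncurry v₂)) :
    velocityCoupling (v₁ + c • v₂) (v₁ + c • v₂) t x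
      = velocityCoupling v₁ v₁ t x + c * (velocityCoupling v₂ v₁ t x
        + velocityCoupling v₁ v₂ t x + c * velocityCoupling v₂ v₂ t x) := by
  have hpx : px (v₁ + c • v₂) = px v₁ + c • px v₂ :=
    px_add_smul (differentiable_of_contDiff_succ hv₁) (differentiable_of_contDiff_succ hv₂) c
  have hpx₂ : px^[2] (v₁ + c • v₂) = px^[2] v₁ + c • px^[2] v₂ :=
    iterate_px_add_smul (hv₁.of_le (by norm_num)) (hv₂.of_le (by norm_num)) c
  simp only [velocityCoupling, hpx, hpx₂, iterate_px_add_smul hv₁ hv₂, Pi.add_apply,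
    Pi.smul_apply, smul_eq_mul]
  ring

theorem correctorSource_add_smul_sub (hζ₁ : Differentiable ℝ (uncurry ζ₁))
    (hζ₂ : Differentiable ℝ (uncurry ζ₂)) (hv₁ : ContDiff ℝ (5 : ℕ) (uncurry v₁))
    (hv₂ : ContDiff ℝ (5 : ℕ) (uncurry v₂)) :
    correctorSource (ζ₁ + c • ζ₂) (v₁ + c • v₂) t x - correctorSource ζ₁ v₁ t x
      = c * ((dispersiveCoupling ζ₂ v₁ t x + dispersiveCoupling ζ₁ v₂ t x
          + c * dispersiveCoupling ζ₂ v₂ t x)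
        + 1 / 45 * px^[4] (pt v₂) t x
        + 1 / 3 * (velocityCoupling v₂ v₁ t x + velocityCoupling v₁ v₂ t x
          + c * velocityCoupling v₂ v₂ t x)) := by
  have hv₁₃ : ContDiff ℝ (3 : ℕ) (uncurry v₁) := hv₁.of_le (by norm_num)
  have hv₂₃ : ContDiff ℝ (3 : ℕ) (uncurry v₂) := hv₂.of_le (by norm_num)
  have hv₃ : ContDiff ℝ (3 : ℕ) (uncurry (v₁ + c • v₂)) := hv₁₃.add (hv₂₃.const_smul c)
  rw [correctorSource, correctorSource, px_mul_px_px_sub_px_sq hv₃, px_mul_px_px_sub_px_sq hv₁₃,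
    dispersiveCoupling_add_smul hζ₁ hζ₂ hv₁₃ hv₂₃, velocityCoupling_add_smul hv₁₃ hv₂₃,
    iterate_px_pt_add_smul hv₁ hv₂]
  simp only [Pi.add_apply, Pi.smul_apply, smul_eq_mul]
  ring

theorem abs_mul_px_le (hu : BoundedDerivsAt M n u t x) (hw : BoundedDerivsAt N 1 w t x) :
    |u t x * px w t x| ≤ M * N := by
  rw [abs_mul]
  exact mul_le_mul hu.abs_le hw.px.abs_le (abs_nonneg _) ((abs_nonneg _).trans hu.abs_le)

theorem abs_dispersiveCoupling_le (hζ : BoundedDerivsAt M 1 ζ t x)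
    (hv : BoundedDerivsAt N 3 v t x) : |dispersiveCoupling ζ v t x| ≤ 5 / 3 * (M * N) := by
  have hM : 0 ≤ M := (abs_nonneg _).trans hζ.abs_le
  calc |dispersiveCoupling ζ v t x|
      ≤ |px ζ t x| * |px (pt v) t x| + 2 / 3 * |ζ t x| * |px^[2] (pt v) t x| := by
        refine (abs_add_le _ _).trans_eq ?_
        simp only [abs_mul, abs_of_pos (show (0 : ℝ) < 2 / 3 by norm_num)]
    _ ≤ M * N + 2 / 3 * M * N := by
        gcongr
        exacts [hζ.px.abs_le, hv.pt.px.abs_le, hζ.abs_le, hv.abs_iterate_px_pt_le]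
    _ = 5 / 3 * (M * N) := by ring

theorem abs_velocityCoupling_le (hu : BoundedDerivsAt M 1 u t x)
    (hw : BoundedDerivsAt N 3 w t x) : |velocityCoupling u w t x| ≤ 2 * (M * N) := by
  have hM : 0 ≤ M := (abs_nonneg _).trans hu.abs_le
  calc |velocityCoupling u w t x|
      ≤ |u t x| * |px^[3] w t x| + |px u t x| * |px^[2] w t x| := by
        simp only [velocityCoupling, ← abs_mul]
        exact abs_sub _ _
    _ ≤ M * N + M * N := by
        gcongr
        exacts [hu.abs_le, hw.abs_iterate_px_le, hu.px.abs_le, hw.px.px.abs_le]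
    _ = 2 * (M * N) := by ring

theorem abs_boussinesqMomentum_add_smul_sub_le (hc : |c| ≤ 1) (hζ₁ : Differentiable ℝ (uncurry ζ₁))
    (hζ₂ : Differentiable ℝ (uncurry ζ₂)) (hv₁ : BoundedDerivsAt M 3 v₁ t x)
    (hv₂ : BoundedDerivsAt M 3 v₂ t x) :
    |boussinesqMomentum ε (ζ₁ + c • ζ₂) (v₁ + c • v₂) t x
        - (boussinesqMomentum ε ζ₁ v₁ t x + c * (pt v₂ t x + px ζ₂ t x))|
      ≤ |ε| * |c| * (M / 3 + 3 * M ^ 2) := by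
  have hdisp : |-(1 / 3) * px^[2] (pt v₂) t x| ≤ M / 3 := by
    rw [abs_mul, abs_neg, abs_of_pos (by norm_num : (0 : ℝ) < 1 / 3)]
    linarith [hv₂.abs_iterate_px_pt_le]
  have hadv : |v₂ t x * px v₁ t x + v₁ t x * px v₂ t x + c * (v₂ t x * px v₂ t x)|
      ≤ 3 * (M * M) :=
    have hv₁' : BoundedDerivsAt M 1 v₁ t x := hv₁.mono (by norm_num)
    have hv₂' : BoundedDerivsAt M 1 v₂ t x := hv₂.mono (by norm_num)
    abs_add_add_mul_le (abs_mul_px_le hv₂ hv₁') (abs_mul_px_le hv₁ hv₂')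
      (abs_mul_px_le hv₂ hv₂') hc
  rw [boussinesqMomentum_add_smul hζ₁ hζ₂ hv₁.contDiff hv₂.contDiff, add_sub_cancel_left,
    abs_mul, abs_mul]
  gcongr
  exact (abs_add_le _ _).trans (by linarith)

theorem abs_correctorSource_add_smul_sub_le (hc : |c| ≤ 1) (hζ₁ : BoundedDerivsAt M 1 ζ₁ t x)
    (hζ₂ : BoundedDerivsAt M 1 ζ₂ t x) (hv₁ : BoundedDerivsAt M 5 v₁ t x)
    (hv₂ : BoundedDerivsAt M 5 v₂ t x) :
    |correctorSource (ζ₁ + c • ζ₂) (v₁ + c • v₂) t x - correctorSource ζ₁ v₁ t x|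
      ≤ |c| * (M / 45 + 7 * M ^ 2) := by
  have hv₁₁ : BoundedDerivsAt M 1 v₁ t x := hv₁.mono (by norm_num)
  have hv₂₁ : BoundedDerivsAt M 1 v₂ t x := hv₂.mono (by norm_num)
  have hv₁₃ : BoundedDerivsAt M 3 v₁ t x := hv₁.mono (by norm_num)
  have hv₂₃ : BoundedDerivsAt M 3 v₂ t x := hv₂.mono (by norm_num)
  have hdisp := abs_add_add_mul_le (abs_dispersiveCoupling_le hζ₂ hv₁₃)
    (abs_dispersiveCoupling_le hζ₁ hv₂₃) (abs_dispersiveCoupling_le hζ₂ hv₂₃) hc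
  have hvel := abs_add_add_mul_le (abs_velocityCoupling_le hv₂₁ hv₁₃)
    (abs_velocityCoupling_le hv₁₁ hv₂₃) (abs_velocityCoupling_le hv₂₁ hv₂₃) hc
  have hlin : |px^[4] (pt v₂) t x| ≤ M := hv₂.abs_iterate_px_pt_le
  rw [correctorSource_add_smul_sub (differentiable_of_contDiff_succ hζ₁.contDiff)
    (differentiable_of_contDiff_succ hζ₂.contDiff) hv₁.contDiff hv₂.contDiff, abs_mul]
  gcongr
  rw [abs_le] at *
  constructor <;> linarith

theorem abs_div_depth_le (hdepth : 1 / 2 ≤ 1 + ε * ζ t x) :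
    |ζ t x / (1 + ε * ζ t x)| ≤ 2 * |ζ t x| := by
  rw [abs_div, abs_of_pos (by linarith : 0 < 1 + ε * ζ t x), div_le_iff₀ (by linarith)]
  nlinarith [abs_nonneg (ζ t x)]

theorem abs_div_depth_mul_dispersiveCoupling_le (hζ : BoundedDerivsAt M 1 ζ t x)
    (hv : BoundedDerivsAt N 3 v t x) (hdepth : 1 / 2 ≤ 1 + ε * ζ t x) :
    |ζ t x / (1 + ε * ζ t x) * dispersiveCoupling ζ v t x| ≤ 2 * M * (5 / 3 * (M * N)) := by
  have hM : 0 ≤ M := (abs_nonneg _).trans hζ.abs_le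
  rw [abs_mul]
  gcongr
  · linarith [abs_div_depth_le hdepth, hζ.abs_le]
  · exact abs_dispersiveCoupling_le hζ hv

theorem momentum_equation_consistency_general (hε : |ε| ≤ 1)
    (hζ₁ : BoundedDerivsAt M 1 ζ₁ t x) (hv₁ : BoundedDerivsAt M 5 v₁ t x)
    (hζ₂ : BoundedDerivsAt M 1 ζ₂ t x) (hv₂ : BoundedDerivsAt M 5 v₂ t x)
    (hmomentum : boussinesqMomentum ε ζ₁ v₁ t x = 0)
    (hcorrector : pt v₂ t x + px ζ₂ t x = correctorSource ζ₁ v₁ t x)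
    (hdepth : 1 / 2 ≤ 1 + ε * (ζ₁ + ε ^ 2 • ζ₂) t x) :
    |extendedMomentum ε (ζ₁ + ε ^ 2 • ζ₂) (v₁ + ε ^ 2 • v₂) t x|
      ≤ (M + 10 * M ^ 2 + 27 * M ^ 3) * |ε| ^ 3 := by
  have hε₂ : |ε ^ 2| ≤ 1 := by
    rw [abs_pow]
    exact pow_le_one₀ (abs_nonneg ε) hε
  have hM : 0 ≤ M := (abs_nonneg _).trans hζ₁.abs_le
  have hv₁₃ : BoundedDerivsAt M 3 v₁ t x := hv₁.mono (by norm_num)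
  have hv₂₃ : BoundedDerivsAt M 3 v₂ t x := hv₂.mono (by norm_num)
  have dζ₁ := differentiable_of_contDiff_succ hζ₁.contDiff
  have dζ₂ := differentiable_of_contDiff_succ hζ₂.contDiff
  have hζ := hζ₁.add_smul hζ₂ hε₂
  have hv := hv₁₃.add_smul hv₂₃ hε₂
  have hstandard := abs_boussinesqMomentum_add_smul_sub_le (ε := ε) hε₂ dζ₁ dζ₂ hv₁₃ hv₂₃
  have hsource := abs_correctorSource_add_smul_sub_le hε₂ hζ₁ hζ₂ hv₁ hv₂
  have hcubic := abs_div_depth_mul_dispersiveCoupling_le hζ hv hdepth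
  rw [extendedMomentum_eq (differentiable_of_contDiff_succ hζ.contDiff _) hv.contDiff
    (by linarith)]
  rw [hmomentum, hcorrector, zero_add] at hstandard
  set ζ := ζ₁ + ε ^ 2 • ζ₂
  set v := v₁ + ε ^ 2 • v₂
  calc |boussinesqMomentum ε ζ v t x - ε ^ 2 * correctorSource ζ v t x
          + ε ^ 3 * (ζ t x / (1 + ε * ζ t x) * dispersiveCoupling ζ v t x)|
      = |(boussinesqMomentum ε ζ v t x - ε ^ 2 * correctorSource ζ₁ v₁ t x)
          + -(ε ^ 2 * (correctorSource ζ v t x - correctorSource ζ₁ v₁ t x))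
          + ε ^ 3 * (ζ t x / (1 + ε * ζ t x) * dispersiveCoupling ζ v t x)| := by ring_nf
    _ ≤ |ε| * |ε ^ 2| * (M / 3 + 3 * M ^ 2) + |ε ^ 2| * (|ε ^ 2| * (M / 45 + 7 * M ^ 2))
          + |ε ^ 3| * (2 * (M + M) * (5 / 3 * ((M + M) * (M + M)))) := by
        refine (abs_add_three _ _ _).trans ?_
        rw [abs_neg, abs_mul (ε ^ 2), abs_mul (ε ^ 3)]
        gcongr
    _ = (M / 3 + 3 * M ^ 2 + |ε| * (M / 45 + 7 * M ^ 2) + 80 / 3 * M ^ 3) * |ε| ^ 3 := by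
        simp only [abs_pow]
        ring
    _ ≤ (M / 3 + 3 * M ^ 2 + 1 * (M / 45 + 7 * M ^ 2) + 80 / 3 * M ^ 3) * |ε| ^ 3 := by gcongr
    _ ≤ (M + 10 * M ^ 2 + 27 * M ^ 3) * |ε| ^ 3 := by
        refine mul_le_mul_of_nonneg_right ?_ (by positivity)
        linarith [pow_nonneg hM 3]

end

theorem momentum_equation_consistency (M : ℝ) (hM : 0 < M) :
    ∃ C > (0:ℝ), ∀ ε T : ℝ, 0 < ε → ε ≤ 1 → 0 < T →
      ∀ ζ₁ v₁ ζ₂ v₂ : ℝ → ℝ → ℝ,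
      ContDiff ℝ (⊤ : ℕ∞) (Function.uncurry ζ₁) → ContDiff ℝ (⊤ : ℕ∞) (Function.uncurry v₁) →
      ContDiff ℝ (⊤ : ℕ∞) (Function.uncurry ζ₂) → ContDiff ℝ (⊤ : ℕ∞) (Function.uncurry v₂) →
      -- (i) standard Boussinesq momentum equation for (ζ₁, v₁)
      (∀ t ∈ Set.Icc (0:ℝ) T, ∀ x : ℝ,
        pt v₁ t x - ε / 3 * px (px (pt v₁)) t x + px ζ₁ t x
          + ε * v₁ t x * px v₁ t x = 0) →
      -- (ii) corrector equation ∂_t v₂ + ∂_x ζ₂ = f(ζ₁, v₁)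
      (∀ t ∈ Set.Icc (0:ℝ) T, ∀ x : ℝ,
        pt v₂ t x + px ζ₂ t x
          = px ζ₁ t x * px (pt v₁) t x
            + 2 / 3 * ζ₁ t x * px (px (pt v₁)) t x
            + 1 / 45 * px (px (px (px (pt v₁)))) t x
            + 1 / 3 * px (fun t x => v₁ t x * px (px v₁) t x - (px v₁ t x) ^ 2) t x) →
      -- (iii) all partial derivatives of total order ≤ 6 bounded by M
      (∀ n : ℕ, n ≤ 6 → ∀ t ∈ Set.Icc (0:ℝ) T, ∀ x : ℝ,
        ‖iteratedFDeriv ℝ n (Function.uncurry ζ₁) (t, x)‖ ≤ M ∧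
        ‖iteratedFDeriv ℝ n (Function.uncurry v₁) (t, x)‖ ≤ M ∧
        ‖iteratedFDeriv ℝ n (Function.uncurry ζ₂) (t, x)‖ ≤ M ∧
        ‖iteratedFDeriv ℝ n (Function.uncurry v₂) (t, x)‖ ≤ M) →
      let ζ : ℝ → ℝ → ℝ := fun t x => ζ₁ t x + ε ^ 2 * ζ₂ t x
      let v : ℝ → ℝ → ℝ := fun t x => v₁ t x + ε ^ 2 * v₂ t x
      -- (iv) nonvanishing depth
      (∀ t ∈ Set.Icc (0:ℝ) T, ∀ x : ℝ, 1 + ε * ζ t x ≥ 1 / 2) →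
      ∀ t ∈ Set.Icc (0:ℝ) T, ∀ x : ℝ,
        |pt v t x
          - ε / (3 * (1 + ε * ζ t x))
              * px (fun t x => (1 + 3 * ε * ζ t x) * px (pt v) t x) t x
          - ε ^ 2 / 45 * px (px (px (px (pt v)))) t x
          + px ζ t x + ε * v t x * px v t x
          - ε ^ 2 / 3 * px (fun t x => v t x * px (px v) t x - (px v t x) ^ 2) t x|
        ≤ C * ε ^ 3 := by
  refine ⟨M + 10 * M ^ 2 + 27 * M ^ 3, by positivity, ?_⟩
  intro ε T hε₀ hε₁ _ ζ₁ v₁ ζ₂ v₂ hζ₁ hv₁ hζ₂ hv₂ hmomentum hcorrector hbound _ _ hdepth t ht x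
  rw [← abs_of_pos hε₀] at hε₁
  have hconsistent := momentum_equation_consistency_general hε₁
    (.of_contDiff_top hζ₁ (fun n hn => (hbound n hn t ht x).1) (by norm_num))
    (.of_contDiff_top hv₁ (fun n hn => (hbound n hn t ht x).2.1) (by norm_num))
    (.of_contDiff_top hζ₂ (fun n hn => (hbound n hn t ht x).2.2.1) (by norm_num))
    (.of_contDiff_top hv₂ (fun n hn => (hbound n hn t ht x).2.2.2) (by norm_num))
    (hmomentum t ht x) (hcorrector t ht x) (hdepth t ht x)
  rwa [abs_of_pos hε₀] at hconsistent
end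

section
/- Let 0 < ε ≤ 1, T > 0 and M > 0. Let ζ₁, v₁ : [0,T] × ℝ → ℝ be smooth functions solving the standard Boussinesq system exactly: ∂_t ζ₁ + ∂_x((1+εζ₁)v₁) = 0 and ∂_t v₁ − (ε/3)∂_x²∂_t v₁ + ∂_x ζ₁ + ε v₁ ∂_x v₁ = 0 at every point. Let ζ₂⁰, v₂⁰ : ℝ → ℝ be smooth, set f = ∂_x ζ₁ · ∂_x∂_t v₁ + (2/3)·ζ₁·∂_x²∂_t v₁ + (1/45)·∂_x⁴∂_t v₁ + (1/3)·∂_x(v₁·∂_x²v₁ − (∂_x v₁)²), and define ζ₂(t,x) = (1/2)[(ζ₂⁰+v₂⁰)(x−t) + (ζ₂⁰−v₂⁰)(x+t) + ∫₀ᵗ f(s,x−t+s) ds − ∫₀ᵗ f(s,x+t−s) ds] and v₂(t,x) = (1/2)[(ζ₂⁰+v₂⁰)(x−t) − (ζ₂⁰−v₂⁰)(x+t) + ∫₀ᵗ f(s,x−t+s) ds + ∫₀ᵗ f(s,x+t−s) ds]. Set ζ = ζ₁ + ε²ζ₂ and v = v₁ + ε²v₂ and assume all partial derivatives in t and x of ζ₁,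 v₁, ζ₂, v₂ of total order ≤ 6 are bounded in absolute value by M on [0,T] × ℝ, and 1 + ε·ζ ≥ 1/2 on [0,T] × ℝ. Then ζ(0,x) = ζ₁(0,x) + ε²ζ₂⁰(x), v(0,x) = v₁(0,x) + ε²v₂⁰(x), and there exists a constant C > 0 depending only on M such that for all (t,x) ∈ [0,T] × ℝ: |∂_t ζ + ∂_x((1+εζ)v)| ≤ C·ε³ and |∂_t v − (ε/(3(1+εζ)))·∂_x((1+3εζ)·∂_x∂_t v) − (ε²/45)·∂_x⁴∂_t v + ∂_x ζ + ε v ∂_x v − (ε²/3)·∂_x(v·∂_x²v − (∂_x v)²)| ≤ C·ε³. -/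
/-!
For smooth `(ζ, v)`, the residual of the extended momentum equation equals the residual of the
standard one, minus `ε ^ 2 F(ζ, v)`, plus an explicit term of order `ε ^ 3`, where `F(ζ₁, v₁)` is
the forcing of the correctors. The d'Alembert formulas solve the linear wave system with this
forcing, because they say that the Riemann invariants `v ± ζ` are given by Duhamel's formula. Hence
adding `ε ^ 2 (ζ₂, v₂)` to an exact solution of the standard system cancels everything of order
`ε ^ 2`. What remains are the dispersive term `(ε / 3) ∂_x² ∂_t` of the correctors and differences
of products, all of which carry a factor `ε` or `ε ^ 2` on top of the size `ε ^ 2` of the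
correctors.
-/

open Function Set
open scoped ContDiff Topology

namespace Boussinesq

section ParametricIntegral

universe w

-- A common universe lets the induction on smoothness pass from `E` to `H →L[ℝ] E`.
variable {H E : Type w} [NormedAddCommGroup H] [NormedSpace ℝ H]
  [NormedAddCommGroup E] [NormedSpace ℝ E]

theorem exists_nhds_bound_of_continuous_uncurry {X Y F : Type*} [TopologicalSpace X]
    [TopologicalSpace Y] [SeminormedAddCommGroup F] {g : X → Y → F} (hg : Continuous (uncurry g))
    (x₀ : X) {k : Set Y} (hk : IsCompact k) :
    ∃ s ∈ 𝓝 x₀, ∃ C, ∀ x ∈ s, ∀ y ∈ k, ‖g x y‖ ≤ C := by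
  obtain ⟨C, hC⟩ := hk.exists_bound_of_continuousOn (hg.uncurry_left x₀).continuousOn
  have hopen : IsOpen {p : X × Y | ‖uncurry g p‖ < C + 1} := isOpen_lt hg.norm continuous_const
  obtain ⟨s, v, hs, -, hx₀, hkv, hsv⟩ := generalized_tube_lemma (isCompact_singleton (x := x₀)) hk
    hopen (by rintro ⟨x, y⟩ ⟨rfl, hy⟩; exact (hC y hy).trans_lt (lt_add_one C))
  exact ⟨s, hs.mem_nhds (hx₀ rfl), C + 1, fun x hx y hy =>
    le_of_lt (hsv (mk_mem_prod hx (hkv hy)))⟩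

theorem hasFDerivAt_intervalIntegral_of_contDiff {F : H → ℝ → E} (hF : ContDiff ℝ 1 (uncurry F))
    (a b : ℝ) (p : H) :
    HasFDerivAt (fun p => ∫ s in a..b, F p s)
      (∫ s in a..b, (fderiv ℝ (uncurry F) (p, s)).comp (.inl ℝ H ℝ)) p := by
  have hF' : Continuous (uncurry fun p s => (fderiv ℝ (uncurry F) (p, s)).comp (.inl ℝ H ℝ)) :=
    (hF.continuous_fderiv one_ne_zero).clm_comp continuous_const
  obtain ⟨s, hs, C, hC⟩ := exists_nhds_bound_of_continuous_uncurry hF' p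
    (isCompact_uIcc (a := a) (b := b))
  refine intervalIntegral.hasFDerivAt_integral_of_dominated_of_fderiv_le
    (F' := fun p s => (fderiv ℝ (uncurry F) (p, s)).comp (.inl ℝ H ℝ)) (bound := fun _ => C) hs
    (.of_forall fun q => (hF.continuous.uncurry_left q).aestronglyMeasurable)
    ((hF.continuous.uncurry_left p).intervalIntegrable _ _)
    (hF'.uncurry_left p).aestronglyMeasurable
    (.of_forall fun r hr q hq => hC q hq r (uIoc_subset_uIcc hr))
    intervalIntegrable_const
    (.of_forall fun r _ q _ => ?_)
  exact ((hF.differentiable one_ne_zero (q, r)).hasFDerivAt).comp (f := fun e => (e, r)) q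
    (hasFDerivAt_prodMk_left q r)

theorem contDiff_intervalIntegral {n : ℕ∞} {F : H → ℝ → E} (hF : ContDiff ℝ n (uncurry F))
    (a b : ℝ) : ContDiff ℝ n fun p => ∫ s in a..b, F p s := by
  refine contDiff_iff_forall_nat_le.2 fun m hm => ?_
  replace hF : ContDiff ℝ m (uncurry F) := hF.of_le (mod_cast hm)
  clear hm
  induction m generalizing E with
  | zero =>
    rw [Nat.cast_zero, contDiff_zero] at hF ⊢
    exact intervalIntegral.continuous_parametric_intervalIntegral_of_continuous' hF a b
  | succ m ih =>
    push_cast at hF ⊢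
    exact contDiff_succ_iff_hasFDerivAt.2 ⟨_,
      ih (F := fun p s => (fderiv ℝ (uncurry F) (p, s)).comp (.inl ℝ H ℝ))
        ((hF.fderiv_right le_rfl).clm_comp contDiff_const),
      hasFDerivAt_intervalIntegral_of_contDiff (hF.of_le (by simp)) a b⟩

-- The substitution `s = t * r` moves the dependence on the endpoint into the integrand.
theorem contDiff_primitive {n : ℕ∞} {φ : ℝ → H → E} (hφ : ContDiff ℝ n (uncurry φ)) :
    ContDiff ℝ n fun p : ℝ × H => ∫ s in (0 : ℝ)..p.1, φ s p.2 := by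
  have hrescale : (fun p : ℝ × H => ∫ s in (0 : ℝ)..p.1, φ s p.2) =
      fun p : ℝ × H => p.1 • ∫ r in (0 : ℝ)..1, φ (p.1 * r) p.2 := by
    ext p
    simp [intervalIntegral.smul_integral_comp_mul_left (fun s => φ s p.2)]
  rw [hrescale]
  refine contDiff_fst.smul
    (contDiff_intervalIntegral (F := fun (p : ℝ × H) r => φ (p.1 * r) p.2) ?_ 0 1)
  exact hφ.comp (by fun_prop : ContDiff ℝ n fun q : (ℝ × H) × ℝ => (q.1.1 * q.2, q.1.2))

end ParametricIntegral

/-- Smoothness of a function of time and space, jointly in both variables. -/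
def IsSmooth (u : ℝ → ℝ → ℝ) : Prop := ContDiff ℝ ∞ (uncurry u)

section PartialDerivatives

variable {u w : ℝ → ℝ → ℝ}

theorem hasDerivAt_fst_of_differentiableAt {t x : ℝ} (hu : DifferentiableAt ℝ (uncurry u) (t, x)) :
    HasDerivAt (fun s => u s x) (fderiv ℝ (uncurry u) (t, x) (1, 0)) t :=
  hu.hasFDerivAt.comp_hasDerivAt (f := fun s => (s, x)) t
    ((hasDerivAt_id t).prodMk (hasDerivAt_const t x))

theorem hasDerivAt_snd_of_differentiableAt {t x : ℝ} (hu : DifferentiableAt ℝ (uncurry u) (t, x)) :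
    HasDerivAt (fun y => u t y) (fderiv ℝ (uncurry u) (t, x) (0, 1)) x :=
  hu.hasFDerivAt.comp_hasDerivAt (f := fun y => (t, y)) x
    ((hasDerivAt_const x t).prodMk (hasDerivAt_id x))

theorem uncurry_pt_eq_fderiv (hu : Differentiable ℝ (uncurry u)) :
    uncurry (pt u) = fun p => fderiv ℝ (uncurry u) p (1, 0) :=
  funext fun p => (hasDerivAt_fst_of_differentiableAt (hu p)).deriv

theorem uncurry_px_eq_fderiv (hu : Differentiable ℝ (uncurry u)) :
    uncurry (px u) = fun p => fderiv ℝ (uncurry u) p (0, 1) :=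
  funext fun p => (hasDerivAt_snd_of_differentiableAt (hu p)).deriv

theorem pt_comp_shear_add_mul_px_comp_shear (hu : Differentiable ℝ (uncurry u)) (c t x : ℝ) :
    pt (fun t x => u t (x - c * t)) t x + c * px (fun t x => u t (x - c * t)) t x =
      pt u t (x - c * t) := by
  set L := fderiv ℝ (uncurry u) (t, x - c * t)
  have hL : HasFDerivAt (uncurry u) L (t, x - c * t) := (hu _).hasFDerivAt
  have ht : HasDerivAt (fun s => u s (x - c * s)) (L (1, -c)) t :=
    hL.comp_hasDerivAt (f := fun s => (s, x - c * s)) t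
      ((hasDerivAt_id t).prodMk (by simpa using ((hasDerivAt_id t).const_mul c).const_sub x))
  have hx : HasDerivAt (fun y => u t (y - c * t)) (L (0, 1)) x :=
    hL.comp_hasDerivAt (f := fun y => (t, y - c * t)) x
      ((hasDerivAt_const x t).prodMk ((hasDerivAt_id x).sub_const _))
  calc pt (fun t x => u t (x - c * t)) t x + c * px (fun t x => u t (x - c * t)) t x
      = L (1, -c) + c • L (0, 1) := congrArg₂ (· + c * ·) ht.deriv hx.deriv
    _ = L (1, 0) := by rw [← map_smul, ← map_add]; simp
    _ = pt u t (x - c * t) := (hasDerivAt_fst_of_differentiableAt (hu _)).deriv.symm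

namespace IsSmooth

theorem differentiable (hu : IsSmooth u) : Differentiable ℝ (uncurry u) :=
  ContDiff.differentiable hu (by simp)

theorem hasDerivAt_pt (hu : IsSmooth u) (t x : ℝ) : HasDerivAt (fun s => u s x) (pt u t x) t :=
  (hasDerivAt_fst_of_differentiableAt (hu.differentiable _)).differentiableAt.hasDerivAt

theorem hasDerivAt_px (hu : IsSmooth u) (t x : ℝ) : HasDerivAt (fun y => u t y) (px u t x) x :=
  (hasDerivAt_snd_of_differentiableAt (hu.differentiable _)).differentiableAt.hasDerivAt

theorem contDiff_fderiv (hu : IsSmooth u) : ContDiff ℝ ∞ (fderiv ℝ (uncurry u)) :=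
  ContDiff.fderiv_right hu (by simp)

theorem pt (hu : IsSmooth u) : IsSmooth (pt u) := by
  rw [IsSmooth, uncurry_pt_eq_fderiv hu.differentiable]
  exact hu.contDiff_fderiv.clm_apply contDiff_const

theorem px (hu : IsSmooth u) : IsSmooth (px u) := by
  rw [IsSmooth, uncurry_px_eq_fderiv hu.differentiable]
  exact hu.contDiff_fderiv.clm_apply contDiff_const

theorem add (hu : IsSmooth u) (hw : IsSmooth w) : IsSmooth (u + w) := ContDiff.add hu hw

theorem sub (hu : IsSmooth u) (hw : IsSmooth w) : IsSmooth (u - w) := ContDiff.sub hu hw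

theorem mul (hu : IsSmooth u) (hw : IsSmooth w) : IsSmooth (u * w) := ContDiff.mul hu hw

theorem const_smul (c : ℝ) (hu : IsSmooth u) : IsSmooth (c • u) := ContDiff.const_smul c hu

end IsSmooth

theorem pt_add_smul (hu : IsSmooth u) (hw : IsSmooth w) (c : ℝ) :
    pt (u + c • w) = pt u + c • pt w := by
  ext t x
  exact ((hu.hasDerivAt_pt t x).add ((hw.hasDerivAt_pt t x).const_mul c)).deriv

theorem px_add_smul (hu : IsSmooth u) (hw : IsSmooth w) (c : ℝ) :
    px (u + c • w) = px u + c • px w := by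
  ext t x
  exact ((hu.hasDerivAt_px t x).add ((hw.hasDerivAt_px t x).const_mul c)).deriv

theorem px_one_add_mul_mul (hu : IsSmooth u) (hw : IsSmooth w) (c t x : ℝ) :
    px (fun t x => (1 + c * u t x) * w t x) t x =
      c * px u t x * w t x + (1 + c * u t x) * px w t x :=
  ((((hu.hasDerivAt_px t x).const_mul c).const_add 1).mul (hw.hasDerivAt_px t x)).deriv

theorem px_mul_pxx_sub_px_sq (hu : IsSmooth u) (t x : ℝ) :
    px (fun t x => u t x * px (px u) t x - (px u t x) ^ 2) t x =
      u t x * px (px (px u)) t x - px u t x * px (px u) t x := by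
  refine (((hu.hasDerivAt_px t x).mul (hu.px.px.hasDerivAt_px t x)).sub
    ((hu.px.hasDerivAt_px t x).pow 2)).deriv.trans ?_
  push_cast
  ring

end PartialDerivatives

/-- `u` is smooth and its derivatives of order at most `n` at the point `p` are bounded by `M`.
Smoothness is included so that the bound passes to the partial derivatives of `u`. -/
structure HasDerivBound (M : ℝ) (n : ℕ) (p : ℝ × ℝ) (u : ℝ → ℝ → ℝ) : Prop where
  isSmooth : IsSmooth u
  norm_iteratedFDeriv_le : ∀ k ≤ n, ‖iteratedFDeriv ℝ k (uncurry u) p‖ ≤ M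

section HasDerivBound

variable {M : ℝ} {n : ℕ} {p : ℝ × ℝ} {u : ℝ → ℝ → ℝ}

theorem norm_iteratedFDeriv_fderiv_apply_le {w : ℝ × ℝ} (hu : HasDerivBound M (n + 1) p u)
    (hw : ‖w‖ ≤ 1) {k : ℕ} (hk : k ≤ n) :
    ‖iteratedFDeriv ℝ k (fun q => fderiv ℝ (uncurry u) q w) p‖ ≤ M := calc
  _ ≤ ‖w‖ * ‖iteratedFDeriv ℝ k (fderiv ℝ (uncurry u)) p‖ :=
    norm_iteratedFDeriv_clm_apply_const hu.isSmooth.contDiff_fderiv.contDiffAt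
      (mod_cast le_top)
  _ ≤ ‖iteratedFDeriv ℝ (k + 1) (uncurry u) p‖ := by
    rw [norm_iteratedFDeriv_fderiv]
    exact mul_le_of_le_one_left (norm_nonneg _) hw
  _ ≤ M := hu.norm_iteratedFDeriv_le _ (by lia)

namespace HasDerivBound

theorem abs_le {t x : ℝ} (hu : HasDerivBound M n (t, x) u) : |u t x| ≤ M := by
  simpa using hu.norm_iteratedFDeriv_le 0 n.zero_le

theorem pt (hu : HasDerivBound M (n + 1) p u) : HasDerivBound M n p (pt u) where
  isSmooth := hu.isSmooth.pt
  norm_iteratedFDeriv_le k hk := by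
    rw [uncurry_pt_eq_fderiv hu.isSmooth.differentiable]
    exact norm_iteratedFDeriv_fderiv_apply_le hu (by simp) hk

theorem px (hu : HasDerivBound M (n + 1) p u) : HasDerivBound M n p (px u) where
  isSmooth := hu.isSmooth.px
  norm_iteratedFDeriv_le k hk := by
    rw [uncurry_px_eq_fderiv hu.isSmooth.differentiable]
    exact norm_iteratedFDeriv_fderiv_apply_le hu (by simp) hk

theorem add_smul {K η : ℝ} {w : ℝ → ℝ → ℝ} (hu : HasDerivBound M n p u)
    (hw : HasDerivBound K n p w) (hη₀ : 0 ≤ η) (hη₁ : η ≤ 1) :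
    HasDerivBound (M + K) n p (u + η • w) where
  isSmooth := hu.isSmooth.add (hw.isSmooth.const_smul η)
  norm_iteratedFDeriv_le k hk := by
    have hu' : ContDiffAt ℝ k (uncurry u) p := hu.isSmooth.contDiffAt.of_le (mod_cast le_top)
    have hw' : ContDiffAt ℝ k (uncurry w) p := hw.isSmooth.contDiffAt.of_le (mod_cast le_top)
    calc ‖iteratedFDeriv ℝ k (uncurry u + η • uncurry w) p‖
        = ‖iteratedFDeriv ℝ k (uncurry u) p + η • iteratedFDeriv ℝ k (uncurry w) p‖ := by
          rw [← iteratedFDeriv_const_smul_apply hw']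
          exact congrArg norm (iteratedFDeriv_add_apply hu' (hw'.const_smul η))
      _ ≤ M + 1 * K := by
          refine norm_add_le_of_le (hu.norm_iteratedFDeriv_le k hk) ?_
          rw [norm_smul, Real.norm_of_nonneg hη₀]
          gcongr
          exact hw.norm_iteratedFDeriv_le k hk
      _ = M + K := by rw [one_mul]

end HasDerivBound

end HasDerivBound

/-- Duhamel's formula for the solution of `∂_t u + c ∂_x u = f` with initial datum `g`. -/
noncomputable def transportSolution (c : ℝ) (f : ℝ → ℝ → ℝ) (g : ℝ → ℝ) (t x : ℝ) : ℝ :=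
  g (x - c * t) + ∫ s in (0 : ℝ)..t, f s (x - c * t + c * s)

/-- The elevation component of d'Alembert's solution of
`∂_t ζ + ∂_x v = 0`, `∂_t v + ∂_x ζ = f` with initial data `(ζ₀, v₀)`. -/
noncomputable def dalembertElevation (f : ℝ → ℝ → ℝ) (ζ₀ v₀ : ℝ → ℝ) (t x : ℝ) : ℝ :=
  (1 / 2) * ((ζ₀ (x - t) + v₀ (x - t)) + (ζ₀ (x + t) - v₀ (x + t))
    + (∫ s in (0 : ℝ)..t, f s (x - t + s)) - ∫ s in (0 : ℝ)..t, f s (x + t - s))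

/-- The velocity component of d'Alembert's solution of
`∂_t ζ + ∂_x v = 0`, `∂_t v + ∂_x ζ = f` with initial data `(ζ₀, v₀)`. -/
noncomputable def dalembertVelocity (f : ℝ → ℝ → ℝ) (ζ₀ v₀ : ℝ → ℝ) (t x : ℝ) : ℝ :=
  (1 / 2) * ((ζ₀ (x - t) + v₀ (x - t)) - (ζ₀ (x + t) - v₀ (x + t))
    + (∫ s in (0 : ℝ)..t, f s (x - t + s)) + ∫ s in (0 : ℝ)..t, f s (x + t - s))

section LinearWaves

variable {f : ℝ → ℝ → ℝ} {g ζ₀ v₀ : ℝ → ℝ}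

theorem isSmooth_add_primitive_along_characteristic (hf : IsSmooth f) (hg : ContDiff ℝ ∞ g)
    (c : ℝ) : IsSmooth fun t y => g y + ∫ s in (0 : ℝ)..t, f s (y + c * s) :=
  (hg.comp contDiff_snd).add <| contDiff_primitive (φ := fun s y => f s (y + c * s)) <|
    ContDiff.comp (g := uncurry f) hf
      (by fun_prop : ContDiff ℝ ∞ fun q : ℝ × ℝ => (q.1, q.2 + c * q.1))

theorem isSmooth_transportSolution (hf : IsSmooth f) (hg : ContDiff ℝ ∞ g) (c : ℝ) :
    IsSmooth (transportSolution c f g) :=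
  ContDiff.comp (g := uncurry fun t y => g y + ∫ s in (0 : ℝ)..t, f s (y + c * s))
    (isSmooth_add_primitive_along_characteristic hf hg c)
    (by fun_prop : ContDiff ℝ ∞ fun q : ℝ × ℝ => (q.1, q.2 - c * q.1))

theorem pt_transportSolution_add_mul_px (hf : IsSmooth f) (hg : ContDiff ℝ ∞ g) (c t x : ℝ) :
    pt (transportSolution c f g) t x + c * px (transportSolution c f g) t x = f t x := by
  have hcont : Continuous fun s => f s (x - c * t + c * s) :=
    hf.continuous.comp (by fun_prop : Continuous fun s : ℝ => (s, x - c * t + c * s))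
  calc pt (transportSolution c f g) t x + c * px (transportSolution c f g) t x
      = pt (fun t y => g y + ∫ s in (0 : ℝ)..t, f s (y + c * s)) t (x - c * t) :=
        pt_comp_shear_add_mul_px_comp_shear
          (isSmooth_add_primitive_along_characteristic hf hg c).differentiable c t x
    _ = f t (x - c * t + c * t) :=
        ((hcont.integral_hasStrictDerivAt 0 t).hasDerivAt.const_add _).deriv
    _ = f t x := by rw [sub_add_cancel]

theorem transportSolution_zero (c : ℝ) (f : ℝ → ℝ → ℝ) (g : ℝ → ℝ) (x : ℝ) :
    transportSolution c f g 0 x = g x := by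
  simp [transportSolution]

-- `v + ζ` and `v - ζ` are the Riemann invariants, transported at speeds `1` and `-1`.
theorem dalembertElevation_eq_transportSolution (f : ℝ → ℝ → ℝ) (ζ₀ v₀ : ℝ → ℝ) :
    dalembertElevation f ζ₀ v₀ = (1 / 2 : ℝ) •
      (transportSolution 1 f (v₀ + ζ₀) - transportSolution (-1) f (v₀ - ζ₀)) := by
  ext t x
  simp only [dalembertElevation, transportSolution, Pi.smul_apply, Pi.add_apply, Pi.sub_apply,
    smul_eq_mul, one_mul, neg_mul, sub_neg_eq_add, ← sub_eq_add_neg]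
  ring

theorem dalembertVelocity_eq_transportSolution (f : ℝ → ℝ → ℝ) (ζ₀ v₀ : ℝ → ℝ) :
    dalembertVelocity f ζ₀ v₀ = (1 / 2 : ℝ) •
      (transportSolution 1 f (v₀ + ζ₀) + transportSolution (-1) f (v₀ - ζ₀)) := by
  ext t x
  simp only [dalembertVelocity, transportSolution, Pi.smul_apply, Pi.add_apply, Pi.sub_apply,
    smul_eq_mul, one_mul, neg_mul, sub_neg_eq_add, ← sub_eq_add_neg]
  ring

theorem isSmooth_dalembertElevation (hf : IsSmooth f) (hζ₀ : ContDiff ℝ ∞ ζ₀)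
    (hv₀ : ContDiff ℝ ∞ v₀) : IsSmooth (dalembertElevation f ζ₀ v₀) := by
  rw [dalembertElevation_eq_transportSolution]
  exact ((isSmooth_transportSolution hf (hv₀.add hζ₀) 1).sub
    (isSmooth_transportSolution hf (hv₀.sub hζ₀) (-1))).const_smul _

theorem isSmooth_dalembertVelocity (hf : IsSmooth f) (hζ₀ : ContDiff ℝ ∞ ζ₀)
    (hv₀ : ContDiff ℝ ∞ v₀) : IsSmooth (dalembertVelocity f ζ₀ v₀) := by
  rw [dalembertVelocity_eq_transportSolution]
  exact ((isSmooth_transportSolution hf (hv₀.add hζ₀) 1).add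
    (isSmooth_transportSolution hf (hv₀.sub hζ₀) (-1))).const_smul _

theorem wave_system_of_transport {p q : ℝ → ℝ → ℝ} {t x : ℝ} (hp : IsSmooth p) (hq : IsSmooth q)
    (hpf : pt p t x + 1 * px p t x = f t x) (hqf : pt q t x + -1 * px q t x = f t x) :
    pt ((1 / 2 : ℝ) • (p - q)) t x + px ((1 / 2 : ℝ) • (p + q)) t x = 0 ∧
      pt ((1 / 2 : ℝ) • (p + q)) t x + px ((1 / 2 : ℝ) • (p - q)) t x = f t x := by
  have pt_sub : pt ((1 / 2 : ℝ) • (p - q)) t x = 1 / 2 * (pt p t x - pt q t x) :=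
    (((hp.hasDerivAt_pt t x).sub (hq.hasDerivAt_pt t x)).const_mul _).deriv
  have pt_add : pt ((1 / 2 : ℝ) • (p + q)) t x = 1 / 2 * (pt p t x + pt q t x) :=
    (((hp.hasDerivAt_pt t x).add (hq.hasDerivAt_pt t x)).const_mul _).deriv
  have px_sub : px ((1 / 2 : ℝ) • (p - q)) t x = 1 / 2 * (px p t x - px q t x) :=
    (((hp.hasDerivAt_px t x).sub (hq.hasDerivAt_px t x)).const_mul _).deriv
  have px_add : px ((1 / 2 : ℝ) • (p + q)) t x = 1 / 2 * (px p t x + px q t x) :=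
    (((hp.hasDerivAt_px t x).add (hq.hasDerivAt_px t x)).const_mul _).deriv
  rw [pt_sub, pt_add, px_sub, px_add]
  constructor
  · linear_combination (hpf - hqf) / 2
  · linear_combination (hpf + hqf) / 2

theorem dalembert_wave_system (hf : IsSmooth f) (hζ₀ : ContDiff ℝ ∞ ζ₀) (hv₀ : ContDiff ℝ ∞ v₀)
    (t x : ℝ) :
    pt (dalembertElevation f ζ₀ v₀) t x + px (dalembertVelocity f ζ₀ v₀) t x = 0 ∧
      pt (dalembertVelocity f ζ₀ v₀) t x + px (dalembertElevation f ζ₀ v₀) t x = f t x := by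
  rw [dalembertElevation_eq_transportSolution, dalembertVelocity_eq_transportSolution]
  exact wave_system_of_transport
    (isSmooth_transportSolution hf (hv₀.add hζ₀) 1)
    (isSmooth_transportSolution hf (hv₀.sub hζ₀) (-1))
    (pt_transportSolution_add_mul_px hf (hv₀.add hζ₀) 1 t x)
    (pt_transportSolution_add_mul_px hf (hv₀.sub hζ₀) (-1) t x)

theorem dalembertElevation_zero (f : ℝ → ℝ → ℝ) (ζ₀ v₀ : ℝ → ℝ) (x : ℝ) :
    dalembertElevation f ζ₀ v₀ 0 x = ζ₀ x := by
  simp only [dalembertElevation_eq_transportSolution, Pi.smul_apply, Pi.sub_apply, Pi.add_apply,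
    transportSolution_zero, smul_eq_mul]
  ring

theorem dalembertVelocity_zero (f : ℝ → ℝ → ℝ) (ζ₀ v₀ : ℝ → ℝ) (x : ℝ) :
    dalembertVelocity f ζ₀ v₀ 0 x = v₀ x := by
  simp only [dalembertVelocity_eq_transportSolution, Pi.smul_apply, Pi.sub_apply, Pi.add_apply,
    transportSolution_zero, smul_eq_mul]
  ring

end LinearWaves

/-- The residual of the equation of conservation of mass, common to the standard and the extended
Boussinesq systems. -/
noncomputable def massResidual (ε : ℝ) (ζ v : ℝ → ℝ → ℝ) (t x : ℝ) : ℝ :=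
  pt ζ t x + px (fun t x => (1 + ε * ζ t x) * v t x) t x

/-- The residual of the momentum equation of the standard Boussinesq system. -/
noncomputable def momentumResidual (ε : ℝ) (ζ v : ℝ → ℝ → ℝ) (t x : ℝ) : ℝ :=
  pt v t x - ε / 3 * px (px (pt v)) t x + px ζ t x + ε * v t x * px v t x

/-- The residual of the momentum equation of the extended Boussinesq system. -/
noncomputable def extendedMomentumResidual (ε : ℝ) (ζ v : ℝ → ℝ → ℝ) (t x : ℝ) : ℝ :=
  pt v t x
    - ε / (3 * (1 + ε * ζ t x)) * px (fun t x => (1 + 3 * ε * ζ t x) * px (pt v) t x) t x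
    - ε ^ 2 / 45 * px (px (px (px (pt v)))) t x
    + px ζ t x + ε * v t x * px v t x
    - ε ^ 2 / 3 * px (fun t x => v t x * px (px v) t x - (px v t x) ^ 2) t x

/-- The part of the dispersion of order `ε ^ 2` that is due to the variation of the depth: the
`ε`-derivative at `0` of `(1 / (3 h)) ∂_x ((1 + 3 ε ζ) ∂_x ∂_t v)`, where `h = 1 + ε ζ`. -/
noncomputable def depthDispersion (ζ v : ℝ → ℝ → ℝ) (t x : ℝ) : ℝ :=
  px ζ t x * px (pt v) t x + 2 / 3 * ζ t x * px (px (pt v)) t x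

/-- The forcing of the linear system for the correctors: the terms of order `ε ^ 2` by which the
extended momentum equation differs from the standard one. -/
noncomputable def correctorForcing (ζ v : ℝ → ℝ → ℝ) (t x : ℝ) : ℝ :=
  depthDispersion ζ v t x
    + 1 / 45 * px (px (px (px (pt v)))) t x
    + 1 / 3 * px (fun t x => v t x * px (px v) t x - (px v t x) ^ 2) t x

theorem massResidual_eq {ζ v : ℝ → ℝ → ℝ} (hζ : IsSmooth ζ) (hv : IsSmooth v) (ε t x : ℝ) :
    massResidual ε ζ v t x =
      pt ζ t x + px v t x + ε * (px ζ t x * v t x + ζ t x * px v t x) := by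
  rw [massResidual, px_one_add_mul_mul hζ hv]
  ring

theorem correctorForcing_eq (ζ : ℝ → ℝ → ℝ) {v : ℝ → ℝ → ℝ} (hv : IsSmooth v) (t x : ℝ) :
    correctorForcing ζ v t x = depthDispersion ζ v t x + 1 / 45 * px (px (px (px (pt v)))) t x
      + 1 / 3 * (v t x * px (px (px v)) t x - px v t x * px (px v) t x) := by
  rw [correctorForcing, px_mul_pxx_sub_px_sq hv]

theorem isSmooth_correctorForcing {ζ v : ℝ → ℝ → ℝ} (hζ : IsSmooth ζ) (hv : IsSmooth v) :
    IsSmooth (correctorForcing ζ v) :=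
  have hdepth : IsSmooth (depthDispersion ζ v) :=
    (hζ.px.mul hv.pt.px).add ((hζ.const_smul (2 / 3)).mul hv.pt.px.px)
  have hquad : IsSmooth fun t x => v t x * px (px v) t x - (px v t x) ^ 2 :=
    (hv.mul hv.px.px).sub (ContDiff.pow hv.px 2)
  (hdepth.add (hv.pt.px.px.px.px.const_smul (1 / 45))).add (hquad.px.const_smul (1 / 3))

theorem extendedMomentumResidual_eq {ζ v : ℝ → ℝ → ℝ} (hζ : IsSmooth ζ) (hv : IsSmooth v)
    {ε t x : ℝ} (hdepth : 1 + ε * ζ t x ≠ 0) :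
    extendedMomentumResidual ε ζ v t x =
      momentumResidual ε ζ v t x - ε ^ 2 * correctorForcing ζ v t x
        + ε ^ 3 * (ζ t x / (1 + ε * ζ t x) * depthDispersion ζ v t x) := by
  simp only [extendedMomentumResidual, momentumResidual, correctorForcing, depthDispersion,
    px_one_add_mul_mul hζ hv.pt.px]
  field_simp
  ring

theorem abs_mul_le_sq {M a b : ℝ} (ha : |a| ≤ M) (hb : |b| ≤ M) : |a * b| ≤ M ^ 2 := by
  rw [abs_mul, sq]
  exact mul_le_mul ha hb (abs_nonneg b) ((abs_nonneg a).trans ha)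

theorem abs_perturbed_mul_sub_mul_le {M η a a' b b' : ℝ} (hη₀ : 0 ≤ η) (hη₁ : η ≤ 1)
    (ha : |a| ≤ M) (ha' : |a'| ≤ M) (hb : |b| ≤ M) (hb' : |b'| ≤ M) :
    |(a + η * a') * (b + η * b') - a * b| ≤ 3 * M ^ 2 * η := by
  have hlinear : |a * b' + a' * b| ≤ 2 * M ^ 2 := by
    linarith [abs_add_le (a * b') (a' * b), abs_mul_le_sq ha hb', abs_mul_le_sq ha' hb]
  have hquadratic : |η * (a' * b')| ≤ M ^ 2 := by
    rw [abs_mul, abs_of_nonneg hη₀]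
    exact (mul_le_of_le_one_left (abs_nonneg _) hη₁).trans (abs_mul_le_sq ha' hb')
  calc |(a + η * a') * (b + η * b') - a * b|
      = |a * b' + a' * b + η * (a' * b')| * η := by
        rw [← abs_of_nonneg hη₀, ← abs_mul, abs_of_nonneg hη₀]
        congr 1
        ring
    _ ≤ 3 * M ^ 2 * η := by
        gcongr
        linarith [abs_add_le (a * b' + a' * b) (η * (a' * b'))]

section Residuals

variable {M ε η t x : ℝ} {m n : ℕ} {ζ₁ v₁ ζ₂ v₂ : ℝ → ℝ → ℝ}

theorem abs_massResidual_add_smul_sub_le (hε₀ : 0 ≤ ε) (hη₀ : 0 ≤ η) (hη₁ : η ≤ 1)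
    (hζ₁ : HasDerivBound M (n + 1) (t, x) ζ₁) (hv₁ : HasDerivBound M (n + 1) (t, x) v₁)
    (hζ₂ : HasDerivBound M (n + 1) (t, x) ζ₂) (hv₂ : HasDerivBound M (n + 1) (t, x) v₂) :
    |massResidual ε (ζ₁ + η • ζ₂) (v₁ + η • v₂) t x
        - (massResidual ε ζ₁ v₁ t x + η * (pt ζ₂ t x + px v₂ t x))| ≤ 6 * M ^ 2 * (ε * η) := by
  have hpxζv := abs_perturbed_mul_sub_mul_le hη₀ hη₁ hζ₁.px.abs_le hζ₂.px.abs_le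
    hv₁.abs_le hv₂.abs_le
  have hζpxv := abs_perturbed_mul_sub_mul_le hη₀ hη₁ hζ₁.abs_le hζ₂.abs_le
    hv₁.px.abs_le hv₂.px.abs_le
  have sζ₁ := hζ₁.isSmooth
  have sζ₂ := hζ₂.isSmooth
  have sv₁ := hv₁.isSmooth
  have sv₂ := hv₂.isSmooth
  calc _ = |ε * (((px ζ₁ t x + η * px ζ₂ t x) * (v₁ t x + η * v₂ t x) - px ζ₁ t x * v₁ t x)
            + ((ζ₁ t x + η * ζ₂ t x) * (px v₁ t x + η * px v₂ t x) - ζ₁ t x * px v₁ t x))| := by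
        rw [massResidual_eq (sζ₁.add (sζ₂.const_smul η)) (sv₁.add (sv₂.const_smul η)),
          massResidual_eq sζ₁ sv₁]
        simp only [pt_add_smul sζ₁ sζ₂, px_add_smul sζ₁ sζ₂, px_add_smul sv₁ sv₂,
          Pi.add_apply, Pi.smul_apply, smul_eq_mul]
        congr 1
        ring
    _ ≤ ε * (3 * M ^ 2 * η + 3 * M ^ 2 * η) := by
        rw [abs_mul, abs_of_nonneg hε₀]
        gcongr
        exact (abs_add_le _ _).trans (add_le_add hpxζv hζpxv)
    _ = 6 * M ^ 2 * (ε * η) := by ring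

theorem abs_momentumResidual_add_smul_sub_le (hε₀ : 0 ≤ ε) (hη₀ : 0 ≤ η) (hη₁ : η ≤ 1)
    (hζ₁ : IsSmooth ζ₁) (hv₁ : HasDerivBound M (n + 3) (t, x) v₁)
    (hζ₂ : IsSmooth ζ₂) (hv₂ : HasDerivBound M (n + 3) (t, x) v₂) :
    |momentumResidual ε (ζ₁ + η • ζ₂) (v₁ + η • v₂) t x
        - (momentumResidual ε ζ₁ v₁ t x + η * (pt v₂ t x + px ζ₂ t x))|
      ≤ (3 * M ^ 2 + M) * (ε * η) := by
  have hadvection := abs_perturbed_mul_sub_mul_le hη₀ hη₁ hv₁.abs_le hv₂.abs_le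
    hv₁.px.abs_le hv₂.px.abs_le
  have hdispersion : |η / 3 * px (px (pt v₂)) t x| ≤ M * η := by
    rw [abs_mul, abs_of_nonneg (by positivity)]
    nlinarith [hv₂.pt.px.px.abs_le, abs_nonneg (px (px (pt v₂)) t x)]
  have sv₁ := hv₁.isSmooth
  have sv₂ := hv₂.isSmooth
  calc _ = |ε * (((v₁ t x + η * v₂ t x) * (px v₁ t x + η * px v₂ t x) - v₁ t x * px v₁ t x)
            - η / 3 * px (px (pt v₂)) t x)| := by
        simp only [momentumResidual, pt_add_smul sv₁ sv₂, px_add_smul sv₁ sv₂,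
          px_add_smul sv₁.pt sv₂.pt, px_add_smul sv₁.pt.px sv₂.pt.px, px_add_smul hζ₁ hζ₂,
          Pi.add_apply, Pi.smul_apply, smul_eq_mul]
        congr 1
        ring
    _ ≤ ε * (3 * M ^ 2 * η + M * η) := by
        rw [abs_mul, abs_of_nonneg hε₀]
        gcongr
        exact (abs_sub _ _).trans (add_le_add hadvection hdispersion)
    _ = (3 * M ^ 2 + M) * (ε * η) := by ring

theorem abs_depthDispersion_add_smul_sub_le (hη₀ : 0 ≤ η) (hη₁ : η ≤ 1)
    (hζ₁ : HasDerivBound M (m + 1) (t, x) ζ₁) (hv₁ : HasDerivBound M (n + 3) (t, x) v₁)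
    (hζ₂ : HasDerivBound M (m + 1) (t, x) ζ₂) (hv₂ : HasDerivBound M (n + 3) (t, x) v₂) :
    |depthDispersion (ζ₁ + η • ζ₂) (v₁ + η • v₂) t x - depthDispersion ζ₁ v₁ t x|
      ≤ 5 * M ^ 2 * η := by
  have hslope := abs_perturbed_mul_sub_mul_le hη₀ hη₁ hζ₁.px.abs_le hζ₂.px.abs_le
    hv₁.pt.px.abs_le hv₂.pt.px.abs_le
  have helevation := abs_perturbed_mul_sub_mul_le hη₀ hη₁ hζ₁.abs_le hζ₂.abs_le
    hv₁.pt.px.px.abs_le hv₂.pt.px.px.abs_le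
  have sv₁ := hv₁.isSmooth
  have sv₂ := hv₂.isSmooth
  simp only [depthDispersion, px_add_smul hζ₁.isSmooth hζ₂.isSmooth, pt_add_smul sv₁ sv₂,
    px_add_smul sv₁.pt sv₂.pt, px_add_smul sv₁.pt.px sv₂.pt.px, Pi.add_apply, Pi.smul_apply,
    smul_eq_mul]
  rw [abs_le] at hslope helevation ⊢
  constructor <;> linarith

theorem abs_correctorForcing_add_smul_sub_le (hη₀ : 0 ≤ η) (hη₁ : η ≤ 1)
    (hζ₁ : HasDerivBound M (m + 1) (t, x) ζ₁) (hv₁ : HasDerivBound M (n + 5) (t, x) v₁)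
    (hζ₂ : HasDerivBound M (m + 1) (t, x) ζ₂) (hv₂ : HasDerivBound M (n + 5) (t, x) v₂) :
    |correctorForcing (ζ₁ + η • ζ₂) (v₁ + η • v₂) t x - correctorForcing ζ₁ v₁ t x|
      ≤ (7 * M ^ 2 + M) * η := by
  have hdepth := abs_depthDispersion_add_smul_sub_le hη₀ hη₁ hζ₁ hv₁ hζ₂ hv₂
  have hvvxxx := abs_perturbed_mul_sub_mul_le hη₀ hη₁ hv₁.abs_le hv₂.abs_le
    hv₁.px.px.px.abs_le hv₂.px.px.px.abs_le
  have hvxvxx := abs_perturbed_mul_sub_mul_le hη₀ hη₁ hv₁.px.abs_le hv₂.px.abs_le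
    hv₁.px.px.abs_le hv₂.px.px.abs_le
  have hlinear : |η * px (px (px (px (pt v₂)))) t x| ≤ M * η := by
    rw [abs_mul, abs_of_nonneg hη₀, mul_comm]
    exact mul_le_mul_of_nonneg_right hv₂.pt.px.px.px.px.abs_le hη₀
  have sv₁ := hv₁.isSmooth
  have sv₂ := hv₂.isSmooth
  rw [correctorForcing_eq _ (sv₁.add (sv₂.const_smul η)), correctorForcing_eq _ sv₁]
  simp only [pt_add_smul sv₁ sv₂, px_add_smul sv₁ sv₂,
    px_add_smul sv₁.px sv₂.px, px_add_smul sv₁.px.px sv₂.px.px,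
    px_add_smul sv₁.pt sv₂.pt, px_add_smul sv₁.pt.px sv₂.pt.px,
    px_add_smul sv₁.pt.px.px sv₂.pt.px.px, px_add_smul sv₁.pt.px.px.px sv₂.pt.px.px.px,
    Pi.add_apply, Pi.smul_apply, smul_eq_mul]
  rw [abs_le] at hdepth hvvxxx hvxvxx hlinear ⊢
  constructor <;> linarith

theorem abs_div_mul_depthDispersion_le {ζ v : ℝ → ℝ → ℝ} (hζ : HasDerivBound M (m + 1) (t, x) ζ)
    (hv : HasDerivBound M (n + 3) (t, x) v) (hdepth : 1 / 2 ≤ 1 + ε * ζ t x) :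
    |ζ t x / (1 + ε * ζ t x) * depthDispersion ζ v t x| ≤ 10 / 3 * M ^ 3 := by
  have hdepth_pos : 0 < 1 + ε * ζ t x := by linarith
  have hM : 0 ≤ M := (abs_nonneg _).trans hζ.abs_le
  have hratio : |ζ t x / (1 + ε * ζ t x)| ≤ 2 * M := by
    rw [abs_div, abs_of_pos hdepth_pos, div_le_iff₀ hdepth_pos]
    nlinarith [hζ.abs_le]
  have hdispersion : |depthDispersion ζ v t x| ≤ 5 / 3 * M ^ 2 := by
    have hslope := abs_mul_le_sq hζ.px.abs_le hv.pt.px.abs_le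
    have helevation := abs_mul_le_sq hζ.abs_le hv.pt.px.px.abs_le
    rw [depthDispersion]
    rw [abs_le] at hslope helevation ⊢
    constructor <;> linarith
  calc |ζ t x / (1 + ε * ζ t x) * depthDispersion ζ v t x|
      ≤ 2 * M * (5 / 3 * M ^ 2) := by rw [abs_mul]; gcongr
    _ = 10 / 3 * M ^ 3 := by ring

theorem abs_extendedMomentumResidual_add_smul_sub_le (hε₀ : 0 ≤ ε) (hη₀ : 0 ≤ η) (hη₁ : η ≤ 1)
    (hζ₁ : HasDerivBound M (m + 1) (t, x) ζ₁) (hv₁ : HasDerivBound M (n + 5) (t, x) v₁)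
    (hζ₂ : HasDerivBound M (m + 1) (t, x) ζ₂) (hv₂ : HasDerivBound M (n + 5) (t, x) v₂)
    (hdepth : 1 / 2 ≤ 1 + ε * (ζ₁ + η • ζ₂) t x) :
    |extendedMomentumResidual ε (ζ₁ + η • ζ₂) (v₁ + η • v₂) t x
        - (momentumResidual ε ζ₁ v₁ t x + η * (pt v₂ t x + px ζ₂ t x)
          - ε ^ 2 * correctorForcing ζ₁ v₁ t x)|
      ≤ (3 * M ^ 2 + M) * (ε * η) + (7 * M ^ 2 + M) * (ε ^ 2 * η) + 80 / 3 * M ^ 3 * ε ^ 3 := by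
  have hζ := hζ₁.add_smul hζ₂ hη₀ hη₁
  have hv := hv₁.add_smul hv₂ hη₀ hη₁
  have hstandard := abs_momentumResidual_add_smul_sub_le hε₀ hη₀ hη₁
    hζ₁.isSmooth hv₁ hζ₂.isSmooth hv₂
  have hforcing := abs_correctorForcing_add_smul_sub_le hη₀ hη₁ hζ₁ hv₁ hζ₂ hv₂
  have hhigher := abs_div_mul_depthDispersion_le hζ hv hdepth
  rw [extendedMomentumResidual_eq hζ.isSmooth hv.isSmooth (by linarith)]
  set ζ := ζ₁ + η • ζ₂
  set v := v₁ + η • v₂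
  set R := ζ t x / (1 + ε * ζ t x) * depthDispersion ζ v t x
  set L := momentumResidual ε ζ₁ v₁ t x + η * (pt v₂ t x + px ζ₂ t x)
  calc |momentumResidual ε ζ v t x - ε ^ 2 * correctorForcing ζ v t x + ε ^ 3 * R
          - (L - ε ^ 2 * correctorForcing ζ₁ v₁ t x)|
      = |(momentumResidual ε ζ v t x - L)
          - ε ^ 2 * (correctorForcing ζ v t x - correctorForcing ζ₁ v₁ t x) + ε ^ 3 * R| := by
        congr 1
        ring
    _ ≤ |momentumResidual ε ζ v t x - L|
          + ε ^ 2 * |correctorForcing ζ v t x - correctorForcing ζ₁ v₁ t x| + ε ^ 3 * |R| := by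
        refine (abs_add_le _ _).trans (add_le_add ((abs_sub _ _).trans_eq ?_) (le_of_eq ?_))
        · rw [abs_mul, abs_of_nonneg (sq_nonneg ε)]
        · rw [abs_mul, abs_of_nonneg (pow_nonneg hε₀ 3)]
    _ ≤ (3 * M ^ 2 + M) * (ε * η) + ε ^ 2 * ((7 * M ^ 2 + M) * η)
          + ε ^ 3 * (10 / 3 * (M + M) ^ 3) := by gcongr
    _ = _ := by ring

theorem abs_massResidual_add_correctors_le (hε₀ : 0 ≤ ε) (hε₁ : ε ≤ 1)
    (hζ₁ : HasDerivBound M (n + 1) (t, x) ζ₁) (hv₁ : HasDerivBound M (n + 1) (t, x) v₁)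
    (hζ₂ : HasDerivBound M (n + 1) (t, x) ζ₂) (hv₂ : HasDerivBound M (n + 1) (t, x) v₂)
    (hmass : massResidual ε ζ₁ v₁ t x = 0) (hcorrector : pt ζ₂ t x + px v₂ t x = 0) :
    |massResidual ε (ζ₁ + ε ^ 2 • ζ₂) (v₁ + ε ^ 2 • v₂) t x| ≤ 6 * M ^ 2 * ε ^ 3 := by
  have h := abs_massResidual_add_smul_sub_le hε₀ (sq_nonneg ε) (pow_le_one₀ hε₀ hε₁)
    hζ₁ hv₁ hζ₂ hv₂
  rwa [hmass, hcorrector, mul_zero, add_zero, sub_zero, ← pow_succ'] at h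

theorem abs_extendedMomentumResidual_add_correctors_le (hε₀ : 0 ≤ ε) (hε₁ : ε ≤ 1)
    (hζ₁ : HasDerivBound M (m + 1) (t, x) ζ₁) (hv₁ : HasDerivBound M (n + 5) (t, x) v₁)
    (hζ₂ : HasDerivBound M (m + 1) (t, x) ζ₂) (hv₂ : HasDerivBound M (n + 5) (t, x) v₂)
    (hmomentum : momentumResidual ε ζ₁ v₁ t x = 0)
    (hcorrector : pt v₂ t x + px ζ₂ t x = correctorForcing ζ₁ v₁ t x)
    (hdepth : 1 / 2 ≤ 1 + ε * (ζ₁ + ε ^ 2 • ζ₂) t x) :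
    |extendedMomentumResidual ε (ζ₁ + ε ^ 2 • ζ₂) (v₁ + ε ^ 2 • v₂) t x|
      ≤ (27 * M ^ 3 + 10 * M ^ 2 + 2 * M) * ε ^ 3 := by
  have h := abs_extendedMomentumResidual_add_smul_sub_le hε₀ (sq_nonneg ε) (pow_le_one₀ hε₀ hε₁)
    hζ₁ hv₁ hζ₂ hv₂ hdepth
  rw [hmomentum, hcorrector, zero_add, sub_self, sub_zero] at h
  have hM : 0 ≤ M := (abs_nonneg _).trans hζ₁.abs_le
  have hε₄ : ε ^ 4 ≤ ε ^ 3 := pow_le_pow_of_le_one hε₀ hε₁ (by lia)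
  calc |extendedMomentumResidual ε (ζ₁ + ε ^ 2 • ζ₂) (v₁ + ε ^ 2 • v₂) t x|
      ≤ 80 / 3 * M ^ 3 * ε ^ 3 + (3 * M ^ 2 + M) * ε ^ 3 + (7 * M ^ 2 + M) * ε ^ 4 := by linarith
    _ ≤ 27 * M ^ 3 * ε ^ 3 + (3 * M ^ 2 + M) * ε ^ 3 + (7 * M ^ 2 + M) * ε ^ 3 := by
        gcongr
        norm_num
    _ = (27 * M ^ 3 + 10 * M ^ 2 + 2 * M) * ε ^ 3 := by ring

end Residuals

end Boussinesq

open Boussinesq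

theorem explicit_solution_with_correctors (M : ℝ) (hM : 0 < M) :
    ∃ C > (0:ℝ), ∀ ε T : ℝ, 0 < ε → ε ≤ 1 → 0 < T →
      ∀ ζ₁ v₁ : ℝ → ℝ → ℝ, ∀ ζ₂₀ v₂₀ : ℝ → ℝ,
      ContDiff ℝ (⊤ : ℕ∞) (Function.uncurry ζ₁) → ContDiff ℝ (⊤ : ℕ∞) (Function.uncurry v₁) →
      ContDiff ℝ (⊤ : ℕ∞) ζ₂₀ → ContDiff ℝ (⊤ : ℕ∞) v₂₀ →
      -- (ζ₁, v₁) solves the standard Boussinesq system exactly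
      (∀ t ∈ Set.Icc (0:ℝ) T, ∀ x : ℝ,
        pt ζ₁ t x + px (fun t x => (1 + ε * ζ₁ t x) * v₁ t x) t x = 0) →
      (∀ t ∈ Set.Icc (0:ℝ) T, ∀ x : ℝ,
        pt v₁ t x - ε / 3 * px (px (pt v₁)) t x + px ζ₁ t x
          + ε * v₁ t x * px v₁ t x = 0) →
      let f : ℝ → ℝ → ℝ := fun t x =>
        px ζ₁ t x * px (pt v₁) t x
          + 2 / 3 * ζ₁ t x * px (px (pt v₁)) t x
          + 1 / 45 * px (px (px (px (pt v₁)))) t x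
          + 1 / 3 * px (fun t x => v₁ t x * px (px v₁) t x - (px v₁ t x) ^ 2) t x
      let ζ₂ : ℝ → ℝ → ℝ := fun t x =>
        (1 / 2) * ((ζ₂₀ (x - t) + v₂₀ (x - t)) + (ζ₂₀ (x + t) - v₂₀ (x + t))
          + (∫ s in (0:ℝ)..t, f s (x - t + s)) - ∫ s in (0:ℝ)..t, f s (x + t - s))
      let v₂ : ℝ → ℝ → ℝ := fun t x =>
        (1 / 2) * ((ζ₂₀ (x - t) + v₂₀ (x - t)) - (ζ₂₀ (x + t) - v₂₀ (x + t))
          + (∫ s in (0:ℝ)..t, f s (x - t + s)) + ∫ s in (0:ℝ)..t, f s (x + t - s))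
      let ζ : ℝ → ℝ → ℝ := fun t x => ζ₁ t x + ε ^ 2 * ζ₂ t x
      let v : ℝ → ℝ → ℝ := fun t x => v₁ t x + ε ^ 2 * v₂ t x
      -- all partial derivatives of total order ≤ 6 bounded by M
      (∀ n : ℕ, n ≤ 6 → ∀ t ∈ Set.Icc (0:ℝ) T, ∀ x : ℝ,
        ‖iteratedFDeriv ℝ n (Function.uncurry ζ₁) (t, x)‖ ≤ M ∧
        ‖iteratedFDeriv ℝ n (Function.uncurry v₁) (t, x)‖ ≤ M ∧
        ‖iteratedFDeriv ℝ n (Function.uncurry ζ₂) (t, x)‖ ≤ M ∧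
        ‖iteratedFDeriv ℝ n (Function.uncurry v₂) (t, x)‖ ≤ M) →
      -- nonvanishing depth
      (∀ t ∈ Set.Icc (0:ℝ) T, ∀ x : ℝ, 1 + ε * ζ t x ≥ 1 / 2) →
      -- conclusion: initial data and O(ε³) residuals for both equations
      (∀ x : ℝ, ζ 0 x = ζ₁ 0 x + ε ^ 2 * ζ₂₀ x ∧ v 0 x = v₁ 0 x + ε ^ 2 * v₂₀ x) ∧
      (∀ t ∈ Set.Icc (0:ℝ) T, ∀ x : ℝ,
        |pt ζ t x + px (fun t x => (1 + ε * ζ t x) * v t x) t x| ≤ C * ε ^ 3 ∧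
        |pt v t x
          - ε / (3 * (1 + ε * ζ t x))
              * px (fun t x => (1 + 3 * ε * ζ t x) * px (pt v) t x) t x
          - ε ^ 2 / 45 * px (px (px (px (pt v)))) t x
          + px ζ t x + ε * v t x * px v t x
          - ε ^ 2 / 3 * px (fun t x => v t x * px (px v) t x - (px v t x) ^ 2) t x|
        ≤ C * ε ^ 3) := by
  refine ⟨27 * M ^ 3 + 10 * M ^ 2 + 2 * M, by positivity, ?_⟩
  intro ε T hε hε₁ _ ζ₁ v₁ ζ₂₀ v₂₀ hζ₁ hv₁ hζ₂₀ hv₂₀ hmass hmomentum f ζ₂ v₂ ζ v hbound hdepth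
  have hf : IsSmooth f := isSmooth_correctorForcing hζ₁ hv₁
  refine ⟨fun x => ⟨?_, ?_⟩, fun t ht x => ?_⟩
  · exact congrArg (ζ₁ 0 x + ε ^ 2 * ·) (dalembertElevation_zero f ζ₂₀ v₂₀ x)
  · exact congrArg (v₁ 0 x + ε ^ 2 * ·) (dalembertVelocity_zero f ζ₂₀ v₂₀ x)
  have bζ₁ : HasDerivBound M 6 (t, x) ζ₁ := ⟨hζ₁, fun k hk => (hbound k hk t ht x).1⟩
  have bv₁ : HasDerivBound M 6 (t, x) v₁ := ⟨hv₁, fun k hk => (hbound k hk t ht x).2.1⟩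
  have bζ₂ : HasDerivBound M 6 (t, x) ζ₂ :=
    ⟨isSmooth_dalembertElevation hf hζ₂₀ hv₂₀, fun k hk => (hbound k hk t ht x).2.2.1⟩
  have bv₂ : HasDerivBound M 6 (t, x) v₂ :=
    ⟨isSmooth_dalembertVelocity hf hζ₂₀ hv₂₀, fun k hk => (hbound k hk t ht x).2.2.2⟩
  obtain ⟨hlin_mass, hlin_momentum⟩ := dalembert_wave_system hf hζ₂₀ hv₂₀ t x
  constructor
  · refine (abs_massResidual_add_correctors_le hε.le hε₁ bζ₁ bv₁ bζ₂ bv₂ (hmass t ht x)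
      hlin_mass).trans ?_
    gcongr
    nlinarith [pow_pos hM 2, pow_pos hM 3]
  · exact abs_extendedMomentumResidual_add_correctors_le hε.le hε₁ bζ₁ bv₁ bζ₂ bv₂
      (hmomentum t ht x) hlin_momentum (hdepth t ht x)
end
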